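/- arXiv:2604.25739 — 3 statements merged into one kernel-verified Lean document; each statement's English description precedes it below -/
import Mathlib

section
/- Let D ≥ 1 be an integer and f : ℝ × ℝ → ℂ such that for every unit vector u ∈ ℝ^D the function g_u(w) = f(‖w‖², ‖w − u‖²) is continuous and Lebesgue integrable on ℝ^D, and its Fourier transform ĝ_u(k) = ∫_{ℝ^D} e^{−i⟨w,k⟩} g_u(w) dw is Lebesgue integrable. Define A(z₁, z₂) = ‖z₁‖^{−D}·f(‖z₂‖²/‖z₁‖², ‖z₂ − z₁‖²/‖z₁‖²) for z₁ ≠ 0. Then for all p₁, p₂ ∈ ℝ^D with p₁ ≠ 0, the function z₁ ↦ e^{i⟨z₁,p₂⟩}·∫_{ℝ^D} e^{−i⟨z₂,p₁⟩} A(z₁, z₂) dz₂ is Lebesgue integrable on ℝ^D and (2π)^{−D} ∫_{ℝ^D} e^{i⟨z₁,p₂⟩} ( ∫_{ℝ^D} e^{−i⟨z₂,p₁⟩} A(z₁, z₂) dz₂ ) dz₁ = A(p₁, p₂). -/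
open MeasureTheory RealInnerProductSpace

/-- The Fourier transform of `g_u`. -/
noncomputable def tpG (D : ℕ) (f : ℝ × ℝ → ℂ) (u k : EuclideanSpace ℝ (Fin D)) : ℂ :=
  ∫ w : EuclideanSpace ℝ (Fin D),
    Complex.exp (-Complex.I * ((⟪w, k⟫ : ℝ) : ℂ)) * f (‖w‖ ^ 2, ‖w - u‖ ^ 2)

theorem tpG_swap (D : ℕ) (f : ℝ × ℝ → ℂ) (u e : EuclideanSpace ℝ (Fin D)) (h : ‖u‖ = ‖e‖)
    (c : ℝ) : tpG D f u (c • e) = tpG D f e (c • u) := by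
  set R := Submodule.reflection (ℝ ∙ (u - e))ᗮ with hR
  have hu : R u = e := Submodule.reflection_sub h
  have he : R e = u := by rw [← hu]; exact Submodule.reflection_reflection _ _
  unfold tpG
  rw [← R.measurePreserving.integral_comp' (f := R.toMeasurableEquiv)]
  refine integral_congr_ae (Filter.Eventually.of_forall fun w => ?_)
  have h1 : ⟪R w, c • e⟫ = ⟪w, c • u⟫ := by
    rw [← hu, ← map_smul, R.inner_map_map]
  have h2 : ‖R w - u‖ = ‖w - e‖ := by
    rw [← he, ← map_sub, R.norm_map]
  have h3 : ‖R w‖ = ‖w‖ := R.norm_map w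
  change Complex.exp (-Complex.I * ((⟪R w, c • e⟫ : ℝ) : ℂ)) * f (‖R w‖ ^ 2, ‖R w - u‖ ^ 2) = _
  rw [h1, h2, h3]

theorem tp_inner (D : ℕ) (f : ℝ × ℝ → ℂ) (z p : EuclideanSpace ℝ (Fin D)) (hz : z ≠ 0)
    (hp : p ≠ 0) :
    (∫ z₂ : EuclideanSpace ℝ (Fin D), Complex.exp (-Complex.I * ((⟪z₂, p⟫ : ℝ) : ℂ)) *
      ((((‖z‖ ^ D)⁻¹ : ℝ) : ℂ) * f (‖z₂‖ ^ 2 / ‖z‖ ^ 2, ‖z₂ - z‖ ^ 2 / ‖z‖ ^ 2)))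
    = tpG D f (‖p‖⁻¹ • p) (‖p‖ • z) := by
  have hz' : 0 < ‖z‖ := norm_pos_iff.2 hz
  have hp' : 0 < ‖p‖ := norm_pos_iff.2 hp
  have hn : ‖‖z‖⁻¹ • z‖ = ‖‖p‖⁻¹ • p‖ := by
    rw [norm_smul, norm_smul]; simp [hz'.ne', hp'.ne']
  have h1 : ‖p‖ • z = (‖z‖ * ‖p‖) • (‖z‖⁻¹ • z) := by
    rw [smul_smul]; congr 1; field_simp
  have h2 : (‖z‖ * ‖p‖) • (‖p‖⁻¹ • p) = ‖z‖ • p := by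
    rw [smul_smul]; congr 1; field_simp
  rw [h1, ← tpG_swap D f _ _ hn, h2]
  have key := Measure.integral_comp_smul (μ := (volume : Measure (EuclideanSpace ℝ (Fin D))))
    (fun z₂ : EuclideanSpace ℝ (Fin D) => Complex.exp (-Complex.I * ((⟪z₂, p⟫ : ℝ) : ℂ)) *
      f (‖z₂‖ ^ 2 / ‖z‖ ^ 2, ‖z₂ - z‖ ^ 2 / ‖z‖ ^ 2)) ‖z‖
  rw [finrank_euclideanSpace_fin, abs_of_pos (by positivity), Complex.real_smul,
    ← integral_const_mul] at key
  unfold tpG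
  calc _ = _ := by
        refine integral_congr_ae (Filter.Eventually.of_forall fun w => ?_)
        exact mul_left_comm _ _ _
    _ = _ := key.symm
    _ = _ := by
        refine integral_congr_ae (Filter.Eventually.of_forall fun w => ?_)
        have a1 : ⟪‖z‖ • w, p⟫ = ⟪w, ‖z‖ • p⟫ := by
          rw [real_inner_smul_left, real_inner_smul_right]
        have a2 : ‖‖z‖ • w‖ ^ 2 / ‖z‖ ^ 2 = ‖w‖ ^ 2 := by
          rw [norm_smul, norm_norm]; field_simp
        have a3 : ‖‖z‖ • w - z‖ ^ 2 / ‖z‖ ^ 2 = ‖w - ‖z‖⁻¹ • z‖ ^ 2 := by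
          have : ‖z‖ • w - z = ‖z‖ • (w - ‖z‖⁻¹ • z) := by
            rw [smul_sub, smul_smul, mul_inv_cancel₀ hz'.ne', one_smul]
          rw [this, norm_smul, norm_norm]; field_simp
        simp only [a1, a2, a3]

open FourierTransform in
theorem tp_inversion (D : ℕ) (g : EuclideanSpace ℝ (Fin D) → ℂ) (hc : Continuous g)
    (hi : Integrable g)
    (hf : Integrable (fun k : EuclideanSpace ℝ (Fin D) =>
        ∫ w : EuclideanSpace ℝ (Fin D), Complex.exp (-Complex.I * ((⟪w, k⟫ : ℝ) : ℂ)) * g w))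
    (x : EuclideanSpace ℝ (Fin D)) :
    (∫ k : EuclideanSpace ℝ (Fin D), Complex.exp (Complex.I * ((⟪k, x⟫ : ℝ) : ℂ)) *
      ∫ w : EuclideanSpace ℝ (Fin D), Complex.exp (-Complex.I * ((⟪w, k⟫ : ℝ) : ℂ)) * g w)
    = (((2 * Real.pi) ^ D : ℝ) : ℂ) * g x := by
  have hF : ∀ k, 𝓕 g k = ∫ w : EuclideanSpace ℝ (Fin D),
      Complex.exp (-Complex.I * ((⟪w, (2 * Real.pi) • k⟫ : ℝ) : ℂ)) * g w := by
    intro k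
    rw [Real.fourier_eq']
    refine integral_congr_ae (Filter.Eventually.of_forall fun w => ?_)
    simp only [real_inner_smul_right, smul_eq_mul]
    congr 2; push_cast; ring
  have hpi : (0 : ℝ) < 2 * Real.pi := by positivity
  have hFi : Integrable (𝓕 g) := by
    rw [funext hF]
    exact hf.comp_smul hpi.ne'
  have h0 := hi.fourierInv_fourier_eq hFi (v := x) hc.continuousAt
  rw [Real.fourierInv_eq'] at h0
  rw [← h0]
  have key := Measure.integral_comp_smul (μ := (volume : Measure (EuclideanSpace ℝ (Fin D))))
    (fun k : EuclideanSpace ℝ (Fin D) => Complex.exp (Complex.I * ((⟪k, x⟫ : ℝ) : ℂ)) *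
      ∫ w : EuclideanSpace ℝ (Fin D), Complex.exp (-Complex.I * ((⟪w, k⟫ : ℝ) : ℂ)) * g w)
    (2 * Real.pi)
  rw [finrank_euclideanSpace_fin, abs_of_pos (by positivity), Complex.real_smul] at key
  have e : (∫ v, Complex.exp ((2 * Real.pi * ⟪v, x⟫ : ℝ) * Complex.I) • 𝓕 g v) = _ := 
    (integral_congr_ae (Filter.Eventually.of_forall fun k => by
      simp only [hF, real_inner_smul_left, smul_eq_mul]
      congr 2; push_cast; ring)).trans key
  rw [e, ← mul_assoc, ← Complex.ofReal_mul, mul_inv_cancel₀ (by positivity), Complex.ofReal_one,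
    one_mul]

/-- Self-duality of massless scalar three-point integrals: a rotation-invariant
function of scaling weight `D` with one external point at the origin equals its
own double Fourier transform in the two external variables. -/
theorem three_point_self_duality
    (D : ℕ) (hD : 1 ≤ D) (f : ℝ × ℝ → ℂ)
    (hcont : ∀ u : EuclideanSpace ℝ (Fin D), ‖u‖ = 1 →
      Continuous (fun w : EuclideanSpace ℝ (Fin D) => f (‖w‖ ^ 2, ‖w - u‖ ^ 2)))
    (hint : ∀ u : EuclideanSpace ℝ (Fin D), ‖u‖ = 1 →
      Integrable (fun w : EuclideanSpace ℝ (Fin D) => f (‖w‖ ^ 2, ‖w - u‖ ^ 2)))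
    (hftint : ∀ u : EuclideanSpace ℝ (Fin D), ‖u‖ = 1 →
      Integrable (fun k : EuclideanSpace ℝ (Fin D) =>
        ∫ w : EuclideanSpace ℝ (Fin D),
          Complex.exp (-Complex.I * ((⟪w, k⟫ : ℝ) : ℂ)) * f (‖w‖ ^ 2, ‖w - u‖ ^ 2))) :
    let A : EuclideanSpace ℝ (Fin D) → EuclideanSpace ℝ (Fin D) → ℂ :=
      fun z₁ z₂ => (((‖z₁‖ ^ D)⁻¹ : ℝ) : ℂ) *
        f (‖z₂‖ ^ 2 / ‖z₁‖ ^ 2, ‖z₂ - z₁‖ ^ 2 / ‖z₁‖ ^ 2)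
    ∀ p₁ p₂ : EuclideanSpace ℝ (Fin D), p₁ ≠ 0 →
      Integrable (fun z₁ : EuclideanSpace ℝ (Fin D) =>
        Complex.exp (Complex.I * ((⟪z₁, p₂⟫ : ℝ) : ℂ)) *
          ∫ z₂ : EuclideanSpace ℝ (Fin D),
            Complex.exp (-Complex.I * ((⟪z₂, p₁⟫ : ℝ) : ℂ)) * A z₁ z₂) ∧
      ((((2 * Real.pi) ^ D)⁻¹ : ℝ) : ℂ) *
          ∫ z₁ : EuclideanSpace ℝ (Fin D),
            Complex.exp (Complex.I * ((⟪z₁, p₂⟫ : ℝ) : ℂ)) *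
              ∫ z₂ : EuclideanSpace ℝ (Fin D),
                Complex.exp (-Complex.I * ((⟪z₂, p₁⟫ : ℝ) : ℂ)) * A z₁ z₂
        = A p₁ p₂ := by
  intro A p₁ p₂ hp
  have hp' : 0 < ‖p₁‖ := norm_pos_iff.2 hp
  have : Nonempty (Fin D) := ⟨⟨0, hD⟩⟩
  set e := ‖p₁‖⁻¹ • p₁ with he
  have hne : ‖e‖ = 1 := by rw [he, norm_smul]; simp [hp'.ne']
  set H : EuclideanSpace ℝ (Fin D) → ℂ := fun k =>
    Complex.exp (Complex.I * ((⟪k, ‖p₁‖⁻¹ • p₂⟫ : ℝ) : ℂ)) * tpG D f e k with hH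
  have hae : (fun z₁ : EuclideanSpace ℝ (Fin D) =>
        Complex.exp (Complex.I * ((⟪z₁, p₂⟫ : ℝ) : ℂ)) *
          ∫ z₂ : EuclideanSpace ℝ (Fin D),
            Complex.exp (-Complex.I * ((⟪z₂, p₁⟫ : ℝ) : ℂ)) * A z₁ z₂)
      =ᵐ[volume] fun z₁ => H (‖p₁‖ • z₁) := by
    filter_upwards [Measure.ae_ne volume (0 : EuclideanSpace ℝ (Fin D))] with z hz
    have h1 := tp_inner D f z p₁ hz hp
    simp only [A, hH]
    rw [h1, real_inner_smul_left, real_inner_smul_right, mul_inv_cancel_left₀ hp'.ne']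
  have hHi : Integrable H := by
    have hG : Integrable (tpG D f e) := hftint e hne
    refine hG.bdd_mul (c := 1) ?_ ?_
    · exact Continuous.aestronglyMeasurable (by fun_prop)
    · refine Filter.Eventually.of_forall fun k => ?_
      rw [mul_comm, Complex.norm_exp_ofReal_mul_I]
  refine ⟨(integrable_congr hae).2 (hHi.comp_smul hp'.ne'), ?_⟩
  rw [integral_congr_ae hae, Measure.integral_comp_smul, finrank_euclideanSpace_fin,
    abs_of_pos (by positivity), Complex.real_smul]
  have hinv := tp_inversion D _ (hcont e hne) (hint e hne) (hftint e hne) (‖p₁‖⁻¹ • p₂)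
  have hinv' : ∫ k, H k = _ := hinv
  rw [hinv']
  have a2 : ‖‖p₁‖⁻¹ • p₂‖ ^ 2 = ‖p₂‖ ^ 2 / ‖p₁‖ ^ 2 := by
    rw [norm_smul, norm_inv, norm_norm]; field_simp
  have a3 : ‖‖p₁‖⁻¹ • p₂ - e‖ ^ 2 = ‖p₂ - p₁‖ ^ 2 / ‖p₁‖ ^ 2 := by
    rw [he, ← smul_sub, norm_smul, norm_inv, norm_norm]; field_simp
  have hpi : (((2 * Real.pi) ^ D : ℝ) : ℂ) ≠ 0 := by
    exact_mod_cast (by positivity : ((2 * Real.pi) ^ D : ℝ) ≠ 0)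
  simp only [A, a2, a3]
  rw [mul_left_comm, Complex.ofReal_inv ((2 * Real.pi) ^ D), inv_mul_cancel_left₀ hpi]
end

section
/- Let D ≥ 3 be an integer and λ = (D−2)/2. Let Ḡ be a finite simple graph with vertex set V̄, |V̄| ≥ 4, and edge weights ν : E(Ḡ) → (0, ∞) such that every vertex v satisfies Σ_{e ∋ v} ν_e = D/λ. Assume Ḡ is primitive: for every partition V̄ = V₁ ⊔ V₂ with |V₁| ≥ 2 and |V₂| ≥ 2 one has Σ_{e ∈ E(V₁, V₂)} ν_e > D/λ. For pairwise distinct vertices v, a, b ∈ V̄ and a unit vector e ∈ ℝ^D, define P(v, a, b, e) = ∫_{(ℝ^D)^{V̄∖{v,a,b}}} ∏_{{u,w} ∈ E(Ḡ), v ∉ {u,w}} ‖x_u − x_w‖^{−2λν_{uw}} ∏_{u ∈ V̄∖{v,a,b}} (dx_u/π^{D/2}), where x_a = 0 and x_b = e. Then for every such choice the integrand is Lebesgue integrable, and P(v, a, b, e) takes one and the same finite value for all choices of pairwise distinct v, a, b ∈ V̄ and all unit vectors e ∈ ℝ^D. -/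
open MeasureTheory

section PartA
open MeasureTheory
open scoped ENNReal

namespace Period

set_option linter.unusedSectionVars false

/-- Euclidean space of dimension `D`. -/
abbrev Eu (D : ℕ) := EuclideanSpace ℝ (Fin D)

variable {D : ℕ} {V : Type} [Fintype V] [DecidableEq V]

/-- Lebesgue measure at the vertices of `S`, point mass at the origin at the other vertices. -/
noncomputable def muS (D : ℕ) (S : Finset V) : V → Measure (Eu D) :=
  fun u => if u ∈ S then volume else Measure.dirac 0

instance muS_sf (S : Finset V) (u : V) : SigmaFinite (muS D S u) := by
  unfold muS
  split_ifs <;> infer_instance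

/-- The product measure. -/
noncomputable def PS (D : ℕ) (S : Finset V) : Measure (V → Eu D) := Measure.pi (muS D S)

instance PS_sf (S : Finset V) : SigmaFinite (PS D S) := by
  unfold PS; infer_instance

lemma meas_update (b : V) :
    Measurable (fun p : Eu D × (V → Eu D) => Function.update p.2 b p.1) := by
  rw [measurable_pi_iff]
  intro u
  by_cases h : u = b
  · subst h; simpa using measurable_fst
  · simp only [Function.update_of_ne h]
    exact (measurable_pi_apply u).comp measurable_snd

lemma lintegral_update (S : Finset V) (b : V) (hb : b ∉ S) (f : (V → Eu D) → ℝ≥0∞)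
    (hf : Measurable f) :
    ∫⁻ x, f x ∂(PS D (insert b S)) =
      ∫⁻ w, ∫⁻ x, f (Function.update x b w) ∂(PS D S) := by
  have key : PS D (insert b S) =
      Measure.map (fun p : Eu D × (V → Eu D) => Function.update p.2 b p.1)
        ((volume : Measure (Eu D)).prod (PS D S)) := by
    unfold PS
    apply Measure.pi_eq
    intro s hs
    rw [Measure.map_apply (meas_update b) (MeasurableSet.univ_pi hs)]
    have h1 : (fun p : Eu D × (V → Eu D) => Function.update p.2 b p.1) ⁻¹' (Set.univ.pi s)
        = (s b) ×ˢ (Set.univ.pi (Function.update s b Set.univ)) := by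
      ext p
      simp only [Set.mem_preimage, Set.mem_pi, Set.mem_univ, true_implies, Set.mem_prod]
      constructor
      · intro h
        refine ⟨by simpa using h b, fun u => ?_⟩
        by_cases hu : u = b
        · subst hu; simp
        · simpa [Function.update_of_ne hu] using h u
      · rintro ⟨h1, h2⟩ u
        by_cases hu : u = b
        · subst hu; simpa using h1
        · simpa [Function.update_of_ne hu] using h2 u
    rw [h1, Measure.prod_prod, Measure.pi_pi,
      ← Finset.mul_prod_erase Finset.univ _ (Finset.mem_univ b),
      ← Finset.mul_prod_erase (a := b) Finset.univ (fun i => (muS D (insert b S) i) (s i))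
        (Finset.mem_univ b)]
    have h2 : ∀ u ∈ Finset.univ.erase b, (muS D S u) (Function.update s b Set.univ u) =
        (muS D (insert b S) u) (s u) := by
      intro u hu
      have hu' : u ≠ b := (Finset.mem_erase.mp hu).1
      simp [muS, hu']
    rw [Finset.prod_congr rfl h2]
    simp [muS, hb]
  rw [key, lintegral_map hf (meas_update b)]
  exact lintegral_prod _ (hf.comp (meas_update b)).aemeasurable

lemma meas_inner (S : Finset V) (b : V) (f : (V → Eu D) → ℝ≥0∞) (hf : Measurable f) :
    Measurable (fun w => ∫⁻ x, f (Function.update x b w) ∂(PS D S)) :=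
  Measurable.lintegral_prod_right' (hf.comp (meas_update b))

lemma meas_coord (T : Eu D → Eu D) (hT : Measurable T) (S : Finset V) :
    Measurable (fun (x : V → Eu D) (u : V) => if u ∈ S then T (x u) else x u) := by
  rw [measurable_pi_iff]
  intro u
  split_ifs
  · exact hT.comp (measurable_pi_apply u)
  · exact measurable_pi_apply u

/-- Change of variables in all coordinates of `S`. -/
lemma lintegral_cv (T : Eu D → Eu D) (J : Eu D → ℝ≥0∞) (hT : Measurable T) (hJ : Measurable J)
    (hTJ : ∀ f : Eu D → ℝ≥0∞, Measurable f → ∫⁻ x, f x = ∫⁻ x, f (T x) * J x)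
    (S : Finset V) : ∀ (f : (V → Eu D) → ℝ≥0∞), Measurable f →
    ∫⁻ x, f x ∂(PS D S) =
      ∫⁻ x, f (fun u => if u ∈ S then T (x u) else x u) * ∏ u ∈ S, J (x u) ∂(PS D S) := by
  induction S using Finset.induction_on with
  | empty => intro f hf; simp
  | insert b S hb ih =>
    intro f hf
    have hmeas : Measurable (fun x : V → Eu D =>
        f (fun u => if u ∈ insert b S then T (x u) else x u) * ∏ u ∈ insert b S, J (x u)) := by
      refine Measurable.mul (hf.comp ?_) ?_
      · exact meas_coord T hT (insert b S)
      · exact Finset.measurable_prod _ fun u _ => hJ.comp (measurable_pi_apply u)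
    rw [lintegral_update S b hb f hf, lintegral_update S b hb _ hmeas,
      hTJ _ (meas_inner S b f hf)]
    apply lintegral_congr
    intro w
    rw [ih (fun x => f (Function.update x b (T w)))
      (hf.comp ((meas_update b).comp (measurable_const.prodMk measurable_id))), mul_comm,
      ← lintegral_const_mul _ ?_]
    · apply lintegral_congr
      intro x
      have e1 : (fun u => if u ∈ insert b S then T (Function.update x b w u)
          else Function.update x b w u) =
          Function.update (fun u => if u ∈ S then T (x u) else x u) b (T w) := by
        funext u
        by_cases hu : u = b
        · subst hu; simp
        · simp [hu]
      have e2 : ∏ u ∈ S, J (Function.update x b w u) = ∏ u ∈ S, J (x u) := by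
        apply Finset.prod_congr rfl
        intro u hu
        have hub : u ≠ b := by
          rintro rfl
          exact hb hu
        rw [Function.update_of_ne hub]
      rw [e1, Finset.prod_insert hb, e2]
      simp only [Function.update_self]
      ring
    · refine Measurable.mul (hf.comp ((meas_update b).comp
        (measurable_const.prodMk (meas_coord T hT S)))) ?_
      · exact Finset.measurable_prod _ fun u _ => hJ.comp (measurable_pi_apply u)

lemma ae_zero (S : Finset V) : ∀ᵐ x ∂(PS D S), ∀ u, u ∉ S → x u = 0 := by
  rw [ae_all_iff]
  intro u
  by_cases hu : u ∈ S
  · simp [hu]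
  · have h : ∀ᵐ y ∂(muS D S u), y = 0 := by
      simp only [muS, hu, if_false]
      exact (ae_dirac_iff (p := fun y => y = 0) (measurableSet_singleton (0 : Eu D))).2 rfl
    have := (Measure.tendsto_eval_ae_ae (μ := muS D S) (i := u)).eventually h
    filter_upwards [this] with x hx _
    exact hx

lemma ae_ne (hD : 3 ≤ D) (S : Finset V) :
    ∀ᵐ x ∂(PS D S), ∀ u w, u ∈ S → w ≠ u → x u ≠ x w := by
  have : Nonempty (Fin D) := ⟨⟨0, by omega⟩⟩
  have : Nontrivial (Eu D) := inferInstance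
  rw [ae_all_iff]; intro u
  rw [ae_all_iff]; intro w
  by_cases hu : u ∈ S
  swap
  · simp [hu]
  by_cases hw : w = u
  · simp [hw]
  have hms : MeasurableSet {x : V → Eu D | x u = x w} :=
    measurableSet_eq_fun (measurable_pi_apply u) (measurable_pi_apply w)
  have : PS D S {x : V → Eu D | x u = x w} = 0 := by
    rw [← Finset.insert_erase hu, ← lintegral_indicator_one hms,
      lintegral_update _ u (Finset.notMem_erase u S) _ (measurable_one.indicator hms),
      lintegral_lintegral_swap]
    · rw [← lintegral_zero (μ := PS D (S.erase u))]
      apply lintegral_congr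
      intro x
      have : (fun y => {x : V → Eu D | x u = x w}.indicator (1 : (V → Eu D) → ℝ≥0∞)
          (Function.update x u y)) = ({x w} : Set (Eu D)).indicator 1 := by
        funext y
        simp [Set.indicator, Function.update_of_ne hw]
      rw [this, lintegral_indicator_one (measurableSet_singleton _)]
      simp
    · exact ((measurable_one.indicator hms).comp (meas_update u)).aemeasurable
  have h2 := measure_eq_zero_iff_ae_notMem.mp this
  filter_upwards [h2] with x hx _ _
  exact hx

/-- Tree integral. -/
lemma tree_integral (g : Eu D → ℝ≥0∞) (hg : Measurable g) (p : V → V) (r : V → ℕ) (S : Finset V)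
    (hr : ∀ u ∈ S, r (p u) < r u) :
    ∫⁻ x, ∏ u ∈ S, g (x u - x (p u)) ∂(PS D S) = (∫⁻ z, g z) ^ S.card := by
  induction h : S.card generalizing S with
  | zero =>
    rw [Finset.card_eq_zero] at h
    subst h
    have : IsProbabilityMeasure (PS D (∅ : Finset V)) := by
      have : ∀ u, IsProbabilityMeasure (muS D (∅ : Finset V) u) := by
        intro u; simp only [muS]; simp; infer_instance
      unfold PS; infer_instance
    simp
  | succ n ih =>
    have hne : S.Nonempty := by rw [← Finset.card_pos]; omega
    obtain ⟨b, hb, hmax⟩ := S.exists_max_image r hne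
    have hcard : (S.erase b).card = n := by rw [Finset.card_erase_of_mem hb]; omega
    have hm : ∀ S' : Finset V, Measurable (fun x : V → Eu D => ∏ u ∈ S', g (x u - x (p u))) :=
      fun S' => Finset.measurable_prod _ fun u _ =>
        hg.comp ((measurable_pi_apply u).sub (measurable_pi_apply (p u)))
    have hu := lintegral_update (S.erase b) b (Finset.notMem_erase b S) _ (hm S)
    rw [Finset.insert_erase hb] at hu
    rw [hu, lintegral_lintegral_swap]
    · have : ∀ x : V → Eu D, ∫⁻ y, ∏ u ∈ S, g (Function.update x b y u - Function.update x b y (p u))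
          = (∏ u ∈ S.erase b, g (x u - x (p u))) * ∫⁻ z, g z := by
        intro x
        have e : ∀ y, ∏ u ∈ S, g (Function.update x b y u - Function.update x b y (p u)) =
            (∏ u ∈ S.erase b, g (x u - x (p u))) * g (y - x (p b)) := by
          intro y
          rw [← Finset.prod_erase_mul S _ hb]
          congr 1
          · apply Finset.prod_congr rfl
            intro u hu
            have h1 := Finset.mem_erase.mp hu
            have h2 : p u ≠ b := by
              intro h3
              have := hr u h1.2
              have := hmax u h1.2
              rw [h3] at *
              omega
            rw [Function.update_of_ne h1.1, Function.update_of_ne h2]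
          · have h2 : p b ≠ b := by
              intro h3
              have := hr b hb
              rw [h3] at this
              omega
            rw [Function.update_self, Function.update_of_ne h2]
        simp_rw [e]
        have hgm : Measurable (fun y => g (y - x (p b))) := hg.comp (measurable_id.sub_const _)
        rw [lintegral_const_mul _ hgm, lintegral_sub_right_eq_self g]
      simp_rw [this]
      rw [lintegral_mul_const _ (hm _), ih (S.erase b)
        (fun u hu => hr u (Finset.mem_of_mem_erase hu)) hcard, pow_succ]
    · exact ((hm S).comp (meas_update b)).aemeasurable

end Period

end PartA

section PartB
namespace Period

open Finset

/-- One step of the interval induction: split at the position `k1` of a maximum. -/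
lemma cart_step (s T : ℕ → ℕ → ℝ) (L : ℕ → ℝ) (d ε : ℝ)
    (hs : ∀ i j, 0 ≤ s i j)
    (p q k1 : ℕ) (hp : p < k1) (hq : k1 < q) (X : ℝ)
    (hT : ∀ i j k, i < k → k ≤ j → j < q → L k ≤ T i j ∧ L k ≤ T j i)
    (hX : X = 0 ∨ ∃ k0, p < k0 ∧ k0 < q ∧ X = L k1 - L k0)
    (hl : ∀ X, (X = 0 ∨ ∃ k0, p < k0 ∧ k0 < k1 ∧ X = L k1 - L k0) →
      ∑ i ∈ Ico p k1, ∑ j ∈ Ico p k1, s i j * (L k1 - T i j) ≤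
        ∑ k ∈ Ico (p + 1) k1, d * (L k1 - L k) - ε * X)
    (hr : ∀ X, (X = 0 ∨ ∃ k0, k1 < k0 ∧ k0 < q ∧ X = L k1 - L k0) →
      ∑ i ∈ Ico k1 q, ∑ j ∈ Ico k1 q, s i j * (L k1 - T i j) ≤
        ∑ k ∈ Ico (k1 + 1) q, d * (L k1 - L k) - ε * X) :
    ∑ i ∈ Ico p q, ∑ j ∈ Ico p q, s i j * (L k1 - T i j) ≤
        ∑ k ∈ Ico (p + 1) q, d * (L k1 - L k) - ε * X := by
  have hsplit : ∀ f : ℕ → ℝ, ∑ i ∈ Ico p q, f i = ∑ i ∈ Ico p k1, f i + ∑ i ∈ Ico k1 q, f i :=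
    fun f => (Finset.sum_Ico_consecutive f hp.le hq.le).symm
  have hE : ∑ k ∈ Ico (p + 1) q, d * (L k1 - L k) =
      ∑ k ∈ Ico (p + 1) k1, d * (L k1 - L k) + ∑ k ∈ Ico (k1 + 1) q, d * (L k1 - L k) := by
    rw [← Finset.sum_Ico_consecutive _ (show p + 1 ≤ k1 from hp) hq.le,
      Finset.sum_eq_sum_Ico_succ_bot hq]
    simp
  have c1 : ∑ i ∈ Ico p k1, ∑ j ∈ Ico k1 q, s i j * (L k1 - T i j) ≤ 0 := by
    refine Finset.sum_nonpos fun i hi => Finset.sum_nonpos fun j hj => ?_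
    rw [mem_Ico] at hi hj
    exact mul_nonpos_of_nonneg_of_nonpos (hs i j) (by linarith [(hT i j k1 hi.2 hj.1 hj.2).1])
  have c2 : ∑ i ∈ Ico k1 q, ∑ j ∈ Ico p k1, s i j * (L k1 - T i j) ≤ 0 := by
    refine Finset.sum_nonpos fun i hi => Finset.sum_nonpos fun j hj => ?_
    rw [mem_Ico] at hi hj
    exact mul_nonpos_of_nonneg_of_nonpos (hs i j) (by linarith [(hT j i k1 hj.2 hi.1 hi.2).2])
  have hmain : ∑ i ∈ Ico p q, ∑ j ∈ Ico p q, s i j * (L k1 - T i j) ≤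
      ∑ i ∈ Ico p k1, ∑ j ∈ Ico p k1, s i j * (L k1 - T i j) +
      ∑ i ∈ Ico k1 q, ∑ j ∈ Ico k1 q, s i j * (L k1 - T i j) := by
    rw [hsplit]
    simp_rw [hsplit, Finset.sum_add_distrib]
    linarith
  rw [hE]
  have l0 := hl 0 (Or.inl rfl)
  have r0 := hr 0 (Or.inl rfl)
  rcases hX with rfl | ⟨k0, h1, h2, rfl⟩
  · linarith
  · rcases lt_trichotomy k0 k1 with h | h | h
    · have := hl _ (Or.inr ⟨k0, h1, h, rfl⟩)
      linarith
    · subst h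
      have : ε * (L k0 - L k0) = 0 := by ring
      linarith
    · have := hr _ (Or.inr ⟨k0, h, h2, rfl⟩)
      linarith

lemma cart_main (s T : ℕ → ℕ → ℝ) (L : ℕ → ℝ) (d ε : ℝ) (N : ℕ) (hε : 0 ≤ ε)
    (hs : ∀ i j, 0 ≤ s i j) (hs0 : ∀ i, s i i = 0)
    (hT : ∀ i j k, i < k → k ≤ j → j < N → L k ≤ T i j ∧ L k ≤ T j i)
    (hE : ∀ p q, p + 2 ≤ q → q ≤ N → ¬ (p = 0 ∧ q = N) →
      ∑ i ∈ Ico p q, ∑ j ∈ Ico p q, s i j ≤ d * ((q : ℝ) - p - 1) - ε) :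
    ∀ n p q, q - p ≤ n → p < q → q ≤ N → ¬ (p = 0 ∧ q = N) → ∀ M,
      (∀ k, p < k → k < q → L k ≤ M) → ∀ X,
      (X = 0 ∨ ∃ k0, p < k0 ∧ k0 < q ∧ X = M - L k0) →
      ∑ i ∈ Ico p q, ∑ j ∈ Ico p q, s i j * (M - T i j) ≤
        ∑ k ∈ Ico (p + 1) q, d * (M - L k) - ε * X := by
  intro n
  induction n with
  | zero => intro p q h1 h2; omega
  | succ n ih =>
    intro p q h1 h2 h3 h4 M hM X hX
    by_cases hpq : q = p + 1
    · subst hpq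
      have hX0 : X = 0 := by
        rcases hX with h | ⟨k0, h5, h6, _⟩
        · exact h
        · omega
      simp [hX0, hs0]
    · have hne : (Ioo p q).Nonempty := ⟨p + 1, by rw [mem_Ioo]; omega⟩
      obtain ⟨k1, hk1, hmax⟩ := (Ioo p q).exists_max_image L hne
      rw [mem_Ioo] at hk1
      have hmax' : ∀ k, p < k → k < q → L k ≤ L k1 := fun k h5 h6 =>
        hmax k (mem_Ioo.mpr ⟨h5, h6⟩)
      have hE' := hE p q (by omega) h3 h4
      have hMk := hM k1 hk1.1 hk1.2
      have hstep := fun X hX => cart_step s T L d ε hs p q k1 hk1.1 hk1.2 X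
        (fun i j k h5 h6 h7 => hT i j k h5 h6 (by omega)) hX
        (ih p k1 (by omega) hk1.1 (by omega) (by omega) (L k1)
          (fun k h5 h6 => hmax' k h5 (by omega)))
        (ih k1 q (by omega) hk1.2 (by omega) (by omega) (L k1)
          (fun k h5 h6 => hmax' k (by omega) (by omega)))
      have e1 : ∑ i ∈ Ico p q, ∑ j ∈ Ico p q, s i j * (M - T i j) =
          (∑ i ∈ Ico p q, ∑ j ∈ Ico p q, s i j) * (M - L k1) +
          ∑ i ∈ Ico p q, ∑ j ∈ Ico p q, s i j * (L k1 - T i j) := by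
        rw [Finset.sum_mul, ← Finset.sum_add_distrib]
        refine Finset.sum_congr rfl fun i _ => ?_
        rw [Finset.sum_mul, ← Finset.sum_add_distrib]
        refine Finset.sum_congr rfl fun j _ => ?_
        ring
      have e2 : ∑ k ∈ Ico (p + 1) q, d * (M - L k) =
          d * ((q : ℝ) - p - 1) * (M - L k1) + ∑ k ∈ Ico (p + 1) q, d * (L k1 - L k) := by
        have : (((q - (p + 1) : ℕ)) : ℝ) = (q : ℝ) - p - 1 := by
          rw [Nat.cast_sub (by omega)]; push_cast; ring
        rw [← this]
        have h7 : ∀ k, d * (M - L k) = d * (M - L k1) + d * (L k1 - L k) := fun k => by ring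
        rw [Finset.sum_congr rfl (fun k _ => h7 k), Finset.sum_add_distrib]
        simp only [sum_const, Nat.card_Ico, nsmul_eq_mul]
        ring
      have e3 := mul_le_mul_of_nonneg_right hE' (sub_nonneg.mpr hMk)
      have e4 := mul_nonneg hε (sub_nonneg.mpr hMk)
      rw [e1, e2]
      rcases hX with rfl | ⟨k0, h5, h6, rfl⟩
      · have := hstep 0 (Or.inl rfl)
        nlinarith
      · have := hstep _ (Or.inr ⟨k0, h5, h6, rfl⟩)
        nlinarith

lemma cart_full (s T : ℕ → ℕ → ℝ) (L : ℕ → ℝ) (d ε : ℝ) (N : ℕ) (hN : 2 ≤ N) (hε : 0 ≤ ε)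
    (hs : ∀ i j, 0 ≤ s i j) (hs0 : ∀ i, s i i = 0)
    (hT : ∀ i j k, i < k → k ≤ j → j < N → L k ≤ T i j ∧ L k ≤ T j i)
    (hE : ∀ p q, p + 2 ≤ q → q ≤ N → ¬ (p = 0 ∧ q = N) →
      ∑ i ∈ Ico p q, ∑ j ∈ Ico p q, s i j ≤ d * ((q : ℝ) - p - 1) - ε)
    (hfull : ∑ i ∈ Ico 0 N, ∑ j ∈ Ico 0 N, s i j = d * ((N : ℝ) - 1))
    (k f : ℕ) (hk : 0 < k) (hkN : k < N) (hf : 0 < f) (hfN : f < N) :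
    d * ∑ k ∈ Ico 1 N, L k + ε * |L k - L f| ≤ 
      ∑ i ∈ Ico 0 N, ∑ j ∈ Ico 0 N, s i j * T i j := by
  have hne : (Ioo 0 N).Nonempty := ⟨1, by rw [mem_Ioo]; omega⟩
  obtain ⟨k1, hk1, hmax⟩ := (Ioo 0 N).exists_max_image L hne
  rw [mem_Ioo] at hk1
  have hmax' : ∀ k, 0 < k → k < N → L k ≤ L k1 := fun k h5 h6 =>
    hmax k (mem_Ioo.mpr ⟨h5, h6⟩)
  have hcm := cart_main s T L d ε N hε hs hs0 hT hE
  have hstep := fun X hX => cart_step s T L d ε hs 0 N k1 hk1.1 hk1.2 X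
    (fun i j k h5 h6 h7 => hT i j k h5 h6 h7) hX
    (hcm N 0 k1 (by omega) hk1.1 (by omega) (by omega) (L k1)
      (fun k h5 h6 => hmax' k h5 (by omega)))
    (hcm N k1 N (by omega) hk1.2 (by omega) (by omega) (L k1)
      (fun k h5 h6 => hmax' k (by omega) (by omega)))
  have e1 : ∑ i ∈ Ico 0 N, ∑ j ∈ Ico 0 N, s i j * (L k1 - T i j) =
      (∑ i ∈ Ico 0 N, ∑ j ∈ Ico 0 N, s i j) * L k1 -
      ∑ i ∈ Ico 0 N, ∑ j ∈ Ico 0 N, s i j * T i j := by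
    rw [Finset.sum_mul, ← Finset.sum_sub_distrib]
    refine Finset.sum_congr rfl fun i _ => ?_
    rw [Finset.sum_mul, ← Finset.sum_sub_distrib]
    refine Finset.sum_congr rfl fun j _ => ?_
    ring
  have e2 : ∑ k ∈ Ico (0 + 1) N, d * (L k1 - L k) =
      d * ((N : ℝ) - 1) * L k1 - d * ∑ k ∈ Ico 1 N, L k := by
    have : (((N - 1 : ℕ)) : ℝ) = (N : ℝ) - 1 := by
      rw [Nat.cast_sub (by omega)]; push_cast; ring
    rw [← this]
    simp_rw [mul_sub, Finset.sum_sub_distrib, Finset.mul_sum]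
    simp only [zero_add, sum_const, Nat.card_Ico, nsmul_eq_mul]
    ring
  have key : ∀ k, 0 < k → k < N → d * ∑ k ∈ Ico 1 N, L k + ε * (L k1 - L k) ≤
      ∑ i ∈ Ico 0 N, ∑ j ∈ Ico 0 N, s i j * T i j := by
    intro k h1 h2
    have := hstep _ (Or.inr ⟨k, h1, h2, rfl⟩)
    rw [e1, e2, hfull] at this
    linarith
  rcases abs_cases (L k - L f) with ⟨h, _⟩ | ⟨h, _⟩
  · rw [h]
    have h1 := key f hf hfN
    have := mul_le_mul_of_nonneg_left (show L k - L f ≤ L k1 - L f by linarith [hmax' k hk hkN]) hε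
    linarith
  · rw [h]
    have h1 := key k hk hkN
    have := mul_le_mul_of_nonneg_left
      (show -(L k - L f) ≤ L k1 - L k by linarith [hmax' f hf hfN]) hε
    linarith

/-- Prim's algorithm. -/
lemma prim {V : Type} [DecidableEq V] (dst : V → V → ℝ) (U : Finset V) (a : V) (ha : a ∈ U) :
    ∀ n, n + 1 ≤ U.card → ∃ (σ p : ℕ → V) , σ 0 = a ∧ (∀ i ≤ n, σ i ∈ U) ∧
      (∀ i ≤ n, ∀ j ≤ n, σ i = σ j → i = j) ∧
      (∀ k, 0 < k → k ≤ n → (∃ i < k, p k = σ i) ∧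
        ∀ i < k, ∀ w ∈ U, (∀ i' < k, w ≠ σ i') → dst (σ k) (p k) ≤ dst w (σ i)) := by
  intro n
  induction n with
  | zero =>
    intro _
    refine ⟨fun _ => a, fun _ => a, rfl, fun _ _ => ha, fun i hi j hj _ => by omega,
      fun k h1 h2 => by omega⟩
  | succ n ih =>
    intro hn
    obtain ⟨σ, p, h0, hU, hinj, hp⟩ := ih (by omega)
    set S : Finset V := (range (n + 1)).image σ with hS
    have hScard : S.card ≤ n + 1 := by
      have := Finset.card_image_le (s := range (n + 1)) (f := σ)
      simpa using this
    have hne : (U \ S).Nonempty := by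
      rw [← Finset.card_pos]
      have := Finset.le_card_sdiff S U
      omega
    have hSne : S.Nonempty := ⟨σ 0, mem_image_of_mem _ (by simp)⟩
    obtain ⟨⟨w0, u0⟩, hm, hmin⟩ := ((U \ S) ×ˢ S).exists_min_image (fun z => dst z.1 z.2)
      (hne.product hSne)
    rw [mem_product] at hm
    obtain ⟨hw0, hu0⟩ := hm
    simp only at hw0 hu0
    rw [mem_sdiff] at hw0
    have hS' : ∀ i ≤ n, σ i ∈ S := fun i hi => mem_image_of_mem _ (by simp; omega)
    have hw0' : ∀ i ≤ n, σ i ≠ w0 := fun i hi h => hw0.2 (h ▸ hS' i hi)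
    refine ⟨fun i => if i ≤ n then σ i else w0, fun i => if i ≤ n then p i else u0,
      by simp [h0], ?_, ?_, ?_⟩
    · intro i hi
      by_cases h : i ≤ n
      · simpa [h] using hU i h
      · simpa [h] using hw0.1
    · intro i hi j hj hij
      by_cases h : i ≤ n <;> by_cases h' : j ≤ n <;> simp only [h, h', if_true, if_false] at hij
      · exact hinj i h j h' hij
      · exact absurd hij (hw0' i h)
      · exact absurd hij.symm (hw0' j h')
      · omega
    · intro k hk hkn
      by_cases h : k ≤ n
      · obtain ⟨⟨i, hi, hpi⟩, h2⟩ := hp k hk h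
        refine ⟨⟨i, hi, ?_⟩, ?_⟩
        · simp only [h, if_true, show i ≤ n by omega, hpi]
        · intro i hi w hw hws
          simp only [h, if_true, show i ≤ n by omega]
          refine h2 i hi w hw fun i' hi' => ?_
          have := hws i' hi'
          simpa only [show i' ≤ n by omega, if_true] using this
      · have hk' : k = n + 1 := by omega
        subst hk'
        rw [hS, mem_image] at hu0
        obtain ⟨i0, hi0, rfl⟩ := hu0
        rw [mem_range] at hi0
        refine ⟨⟨i0, hi0, ?_⟩, ?_⟩
        · simp [show i0 ≤ n by omega]
        · intro i hi w hw hws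
          simp only [h, if_false, show i ≤ n by omega, if_true]
          refine hmin (w, σ i) ?_
          rw [mem_product]
          refine ⟨?_, hS' i (by omega)⟩
          rw [mem_sdiff]
          refine ⟨hw, ?_⟩
          intro hwS
          rw [hS, mem_image] at hwS
          obtain ⟨i', hi', rfl⟩ := hwS
          rw [mem_range] at hi'
          have := hws i' hi'
          simp [show i' ≤ n by omega] at this

end Period

end PartB

section PartC
open MeasureTheory
open scoped ENNReal

namespace Period

set_option linter.unusedSectionVars false

variable {D : ℕ}

/-- Inversion in the unit sphere. -/
noncomputable def inv0 (x : Eu D) : Eu D := EuclideanGeometry.inversion 0 1 x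

lemma inv0_eq (x : Eu D) : inv0 x = (1 / ‖x‖) ^ 2 • x := by
  simp [inv0, EuclideanGeometry.inversion]

lemma inv0_zero : inv0 (0 : Eu D) = 0 := by simp [inv0_eq]

lemma meas_inv0 : Measurable (inv0 : Eu D → Eu D) := by
  have : (inv0 : Eu D → Eu D) = fun x => (1 / ‖x‖) ^ 2 • x := funext inv0_eq
  rw [this]
  fun_prop

lemma norm_inv0 (x : Eu D) : ‖inv0 x‖ = ‖x‖⁻¹ := by
  rw [inv0_eq, norm_smul]
  by_cases h : ‖x‖ = 0
  · simp [h]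
  · simp; field_simp

lemma inv0_inv0 (x : Eu D) : inv0 (inv0 x) = x :=
  EuclideanGeometry.inversion_inversion 0 one_ne_zero x

lemma norm_inv0_sub (x y : Eu D) (hx : x ≠ 0) (hy : y ≠ 0) :
    ‖inv0 x - inv0 y‖ = ‖x‖⁻¹ * ‖y‖⁻¹ * ‖x - y‖ := by
  rw [← dist_eq_norm, ← dist_eq_norm, inv0, inv0,
    EuclideanGeometry.dist_inversion_inversion hx hy]
  simp [mul_comm]

lemma inv0_smul (r : ℝ) (x : Eu D) : inv0 (r • x) = r⁻¹ • inv0 x := by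
  rw [inv0_eq, inv0_eq, smul_smul, smul_smul, norm_smul]
  by_cases h : r = 0
  · simp [h]
  by_cases hx : ‖x‖ = 0
  · simp [hx]
  congr 1
  rw [div_pow, div_pow, mul_pow, Real.norm_eq_abs, sq_abs]
  field_simp

lemma cv_inv (hD : 3 ≤ D) (f : Eu D → ℝ≥0∞) :
    ∫⁻ x, f x = ∫⁻ x, f (inv0 x) * ENNReal.ofReal (‖x‖ ^ (-(2 * D : ℝ))) := by
  have : Nonempty (Fin D) := ⟨⟨0, by omega⟩⟩
  have : Nontrivial (Eu D) := inferInstance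
  have hms : MeasurableSet ({0}ᶜ : Set (Eu D)) := (measurableSet_singleton 0).compl
  have h0 : ∀ g : Eu D → ℝ≥0∞, ∫⁻ x, g x = ∫⁻ x in {0}ᶜ, g x := by
    intro g
    rw [restrict_compl_singleton]
  have him : (inv0 : Eu D → Eu D) '' {0}ᶜ = {0}ᶜ := by
    ext y
    simp only [Set.mem_image, Set.mem_compl_iff, Set.mem_singleton_iff]
    constructor
    · rintro ⟨x, hx, rfl⟩ h
      apply hx
      rw [← inv0_inv0 x, h, inv0_zero]
    · intro hy
      refine ⟨inv0 y, fun h => hy ?_, inv0_inv0 y⟩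
      rw [← inv0_inv0 y, h, inv0_zero]
  rw [h0, h0]
  conv_lhs => rw [← him]
  rw [lintegral_image_eq_lintegral_abs_det_fderiv_mul volume hms
    (f' := fun x => ((1 / dist x 0) ^ 2 • ((ℝ ∙ (x - 0))ᗮ.reflection : Eu D →L[ℝ] Eu D)))
    (fun x hx => (EuclideanGeometry.hasFDerivAt_inversion hx).hasFDerivWithinAt)]
  · refine setLIntegral_congr_fun hms fun x hx => ?_
    rw [mul_comm]
    congr 2
    have hx' : 0 < ‖x‖ := norm_pos_iff.mpr hx
    have e1 : (((1 / dist x 0) ^ 2 • ((ℝ ∙ (x - 0))ᗮ.reflection : Eu D →L[ℝ] Eu D))).det =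
        ((1 / ‖x‖) ^ 2) ^ D * LinearMap.det ((ℝ ∙ (x - 0))ᗮ.reflection).toLinearMap := by
      rw [ContinuousLinearMap.det, ContinuousLinearMap.toLinearMap_smul, LinearMap.det_smul,
        finrank_euclideanSpace_fin, dist_zero_right]
      rfl
    rw [e1, Submodule.det_reflection, abs_mul, abs_pow (-1 : ℝ)]
    simp only [abs_neg, abs_one, one_pow, mul_one]
    rw [abs_of_nonneg (by positivity), Real.rpow_neg hx'.le, ← pow_mul]
    have : (2 * (D : ℝ)) = ((2 * D : ℕ) : ℝ) := by push_cast; ring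
    rw [this, Real.rpow_natCast, one_div, inv_pow]
  · intro x _ y _ h
    rw [← inv0_inv0 x, ← inv0_inv0 y]
    exact congrArg inv0 h

lemma cv_sim (r : ℝ) (hr : 0 < r) (R : Eu D ≃ₗᵢ[ℝ] Eu D) (f : Eu D → ℝ≥0∞) (hf : Measurable f) :
    ∫⁻ x, f x = ∫⁻ x, f (r • R x) * ENNReal.ofReal (r ^ D) := by
  have hm : Measurable (fun x : Eu D => f (r • R x)) :=
    hf.comp (R.continuous.measurable.const_smul r)
  rw [lintegral_mul_const _ hm]
  have h1 : ∫⁻ x : Eu D, f (r • R x) = ∫⁻ x, f (r • x) :=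
    R.measurePreserving.lintegral_comp (f := fun x => f (r • x)) (hf.comp (measurable_const_smul r))
  have h2 : Measure.map (fun x : Eu D => r • x) volume = ENNReal.ofReal |(r ^ D)⁻¹| • volume := by
    have := Measure.map_addHaar_smul (volume : Measure (Eu D)) hr.ne'
    rwa [finrank_euclideanSpace_fin] at this
  have h3 : ∫⁻ x, f (r • x) = ENNReal.ofReal |(r ^ D)⁻¹| * ∫⁻ x, f x := by
    rw [← lintegral_map hf (measurable_const_smul r), h2, lintegral_smul_measure]
    rfl
  rw [h1, h3, abs_of_nonneg (by positivity), mul_right_comm, ← ENNReal.ofReal_mul (by positivity),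
    inv_mul_cancel₀ (by positivity)]
  simp

lemma cv_refl (e : Eu D) (f : Eu D → ℝ≥0∞) :
    ∫⁻ x, f x = ∫⁻ x, f (e - x) * 1 := by
  simp [lintegral_sub_left_eq_self f e]

/-- The integrable radial majorant. -/
noncomputable def gfun (D : ℕ) (δ : ℝ) (z : Eu D) : ℝ :=
  Real.exp (-(D * Real.log ‖z‖) - δ * |Real.log ‖z‖|)

lemma meas_gfun (δ : ℝ) : Measurable (gfun D δ) := by
  unfold gfun
  fun_prop

lemma gfun_finite (hD : 3 ≤ D) (δ : ℝ) (hδ : 0 < δ) : ∫⁻ z, ENNReal.ofReal (gfun D δ z) < ⊤ := by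
  have : Nonempty (Fin D) := ⟨⟨0, by omega⟩⟩
  have : Nontrivial (Eu D) := inferInstance
  have hi : Integrable (gfun D δ) := by
    have := integrable_fun_norm_addHaar (volume : Measure (Eu D))
      (f := fun t => Real.exp (-(D * Real.log t) - δ * |Real.log t|))
    refine this.mpr ?_
    rw [finrank_euclideanSpace_fin, ← Set.Ioc_union_Ioi_eq_Ioi (zero_le_one' ℝ)]
    apply IntegrableOn.union
    · have h1 : IntegrableOn (fun t : ℝ => t ^ (-1 + δ)) (Set.Ioc 0 1) := by
        have := intervalIntegral.intervalIntegrable_rpow' (a := 0) (b := 1)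
          (show -1 < -1 + δ by linarith)
        rwa [intervalIntegrable_iff_integrableOn_Ioc_of_le zero_le_one] at this
      refine h1.congr_fun (fun t ht => ?_) measurableSet_Ioc
      have h2 : Real.log t ≤ 0 := Real.log_nonpos ht.1.le ht.2
      simp only [smul_eq_mul]
      rw [abs_of_nonpos h2, Real.rpow_def_of_pos ht.1, ← Real.rpow_natCast,
        Real.rpow_def_of_pos ht.1, ← Real.exp_add, Nat.cast_sub (by omega)]
      congr 1
      push_cast; ring
    · have h1 : IntegrableOn (fun t : ℝ => t ^ (-1 - δ)) (Set.Ioi 1) :=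
        integrableOn_Ioi_rpow_of_lt (by linarith) zero_lt_one
      refine h1.congr_fun (fun t ht => ?_) measurableSet_Ioi
      have ht' : (1 : ℝ) < t := ht
      have h2 : 0 ≤ Real.log t := Real.log_nonneg ht'.le
      have ht0 : 0 < t := by linarith
      simp only [smul_eq_mul]
      rw [abs_of_nonneg h2, Real.rpow_def_of_pos ht0, ← Real.rpow_natCast,
        Real.rpow_def_of_pos ht0, ← Real.exp_add, Nat.cast_sub (by omega)]
      congr 1
      push_cast; ring
  exact (hasFiniteIntegral_iff_ofReal (Filter.Eventually.of_forall fun z =>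
    (Real.exp_pos _).le)).mp hi.2

/-- Indicator of the dyadic shell. -/
noncomputable def shell (z : Eu D) : ℝ≥0∞ := if 1 ≤ ‖z‖ ∧ ‖z‖ < 2 then 1 else 0

lemma meas_shell : Measurable (shell : Eu D → ℝ≥0∞) := by
  unfold shell
  refine Measurable.ite ?_ measurable_const measurable_const
  exact (measurableSet_le measurable_const measurable_norm).inter
    (measurableSet_lt measurable_norm measurable_const)

/-- Dyadic partition of unity. -/
def Dyadic0 (φ : Eu D → ℝ≥0∞) : Prop :=
  ∀ z : Eu D, z ≠ 0 → ∑' n : ℤ, φ ((2 : ℝ) ^ n • z) = 1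

lemma shell_dyadic : Dyadic0 (shell : Eu D → ℝ≥0∞) := by
  intro z hz
  have hz' : 0 < ‖z‖ := norm_pos_iff.mpr hz
  obtain ⟨n, hn1, hn2⟩ := exists_mem_Ico_zpow hz' (one_lt_two (α := ℝ))
  have hnorm : ∀ k : ℤ, ‖(2 : ℝ) ^ k • z‖ = 2 ^ k * ‖z‖ := by
    intro k; rw [norm_smul, Real.norm_of_nonneg (by positivity)]
  rw [tsum_eq_single (-n)]
  · unfold shell
    rw [hnorm, zpow_neg]
    have h2 : (0 : ℝ) < 2 ^ n := by positivity
    rw [if_pos]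
    rw [zpow_add₀ two_ne_zero, zpow_one] at hn2
    constructor
    · rw [inv_mul_eq_div, le_div_iff₀ h2]; linarith
    · rw [inv_mul_eq_div, div_lt_iff₀ h2]; linarith
  · intro k hk
    unfold shell
    rw [hnorm, if_neg]
    rintro ⟨h1, h2⟩
    apply hk
    have a1 : (2 : ℝ) ^ (0 : ℤ) < 2 ^ (k + (n + 1)) := by
      rw [zpow_add₀ two_ne_zero k, zpow_zero]
      have : (0 : ℝ) < 2 ^ k := by positivity
      nlinarith
    have a2 : (2 : ℝ) ^ (k + n) < 2 ^ (1 : ℤ) := by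
      rw [zpow_add₀ two_ne_zero k, zpow_one]
      have : (0 : ℝ) < 2 ^ k := by positivity
      nlinarith
    rw [zpow_lt_zpow_iff_right₀ one_lt_two] at a1 a2
    omega

lemma shell_inv_dyadic : Dyadic0 (fun z : Eu D => shell (inv0 z)) := by
  intro z hz
  have hz' : inv0 z ≠ 0 := by
    intro h
    apply hz
    rw [← inv0_inv0 z, h, inv0_zero]
  have := shell_dyadic (inv0 z) hz'
  rw [← this, ← (Equiv.neg ℤ).tsum_eq]
  apply tsum_congr
  intro n
  simp only [inv0_smul]
  simp

/-- The normalization constant. -/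
noncomputable def Kc (D : ℕ) : ℝ≥0∞ := ∫⁻ w : Eu D, shell w * ENNReal.ofReal (‖w‖ ^ (-(D : ℝ)))

lemma Kc_pos (hD : 3 ≤ D) : Kc D ≠ 0 := by
  have : Nonempty (Fin D) := ⟨⟨0, by omega⟩⟩
  have : Nontrivial (Eu D) := inferInstance
  intro h
  unfold Kc at h
  rw [lintegral_eq_zero_iff (by
    refine meas_shell.mul ?_
    exact ENNReal.measurable_ofReal.comp (measurable_norm.pow_const _))] at h
  obtain ⟨e, he⟩ := exists_norm_eq (Eu D) (show (0 : ℝ) ≤ 3 / 2 by norm_num)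
  have hne : (Metric.ball e (1 / 2)).Nonempty := ⟨e, by simp⟩
  have hpos := Metric.isOpen_ball.measure_pos (volume : Measure (Eu D)) hne
  apply hpos.ne'
  refine measure_mono_null ?_ h
  intro w hw
  rw [Metric.mem_ball, dist_eq_norm] at hw
  have h1 : ‖w‖ < 2 := by
    have := norm_le_norm_add_norm_sub' w e
    linarith
  have h2 : 1 ≤ ‖w‖ := by
    have := norm_le_norm_add_norm_sub' e w
    rw [norm_sub_rev] at this
    linarith
  simp only [Set.mem_compl_iff, Set.mem_ofPred_eq, Pi.zero_apply]
  unfold shell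
  rw [if_pos ⟨h2, h1⟩, one_mul]
  have : 0 < ‖w‖ ^ (-(D : ℝ)) := Real.rpow_pos_of_pos (by linarith) _
  exact (ENNReal.ofReal_pos.mpr this).ne'

lemma Kc_fin : Kc D ≠ ⊤ := by
  refine ne_top_of_le_ne_top (measure_ball_lt_top (μ := (volume : Measure (Eu D))) (x := 0) (r := 2)).ne ?_
  rw [← lintegral_indicator_one Metric.isOpen_ball.measurableSet]
  refine lintegral_mono fun w => ?_
  unfold shell
  split_ifs with h
  · rw [Set.indicator_of_mem (by simpa using h.2), one_mul]
    refine ENNReal.ofReal_le_one.mpr ?_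
    exact Real.rpow_le_one_of_one_le_of_nonpos h.1 (by simp)
  · simp

end Period

end PartC

section PartD
open MeasureTheory
open scoped ENNReal

namespace Period

set_option linter.unusedSectionVars false

variable {D : ℕ} {V : Type} [Fintype V] [DecidableEq V]

/-- Half-weights of a completed graph. -/
structure Good (D : ℕ) (s : V → V → ℝ) : Prop where
  symm : ∀ u w, s u w = s w u
  diag : ∀ u, s u u = 0
  nonneg : ∀ u w, 0 ≤ s u w
  deg : ∀ u, ∑ w, s u w = D

/-- The integrand of the decompletion at `v`. -/
noncomputable def H (s : V → V → ℝ) (v : V) (x : V → Eu D) : ℝ :=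
  ∏ u ∈ Finset.univ.erase v, ∏ w ∈ Finset.univ.erase v, ‖x u - x w‖ ^ (-(s u w))

lemma H_nonneg (s : V → V → ℝ) (v : V) (x : V → Eu D) : 0 ≤ H s v x :=
  Finset.prod_nonneg fun _ _ => Finset.prod_nonneg fun _ _ => Real.rpow_nonneg (norm_nonneg _) _

lemma meas_H (s : V → V → ℝ) (v : V) : Measurable (H (D := D) s v) := by
  unfold H
  refine Finset.measurable_prod _ fun u _ => Finset.measurable_prod _ fun w _ => ?_
  exact (((measurable_pi_apply u).sub (measurable_pi_apply w)).norm).pow_const _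

lemma meas_Hn (s : V → V → ℝ) (v : V) :
    Measurable (fun x : V → Eu D => ENNReal.ofReal (H s v x)) :=
  ENNReal.measurable_ofReal.comp (meas_H s v)

lemma sum_erase {s : V → V → ℝ} (hs : Good D s) (v : V) :
    ∑ u ∈ Finset.univ.erase v, ∑ w ∈ Finset.univ.erase v, s u w =
      D * ((Fintype.card V : ℝ) - 2) := by
  have h1 : ∀ u, ∑ w ∈ Finset.univ.erase v, s u w = D - s u v := by
    intro u
    rw [← hs.deg u, ← Finset.add_sum_erase _ _ (Finset.mem_univ v)]
    ring
  have h2 : ∑ u ∈ Finset.univ.erase v, s u v = D := by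
    have := h1 v
    rw [hs.diag, sub_zero] at this
    rw [← this]
    exact Finset.sum_congr rfl fun u _ => hs.symm u v
  simp_rw [h1]
  rw [Finset.sum_sub_distrib, h2, Finset.sum_const, Finset.card_erase_of_mem (Finset.mem_univ v),
    Finset.card_univ, nsmul_eq_mul, Nat.cast_sub (Fintype.card_pos_iff.mpr ⟨v⟩)]
  push_cast
  ring

lemma H_scale {s : V → V → ℝ} (hs : Good D s) (v : V) (r : ℝ) (hr : 0 < r) (x y : V → Eu D)
    (h : ∀ u w, u ≠ v → w ≠ v → ‖y u - y w‖ = r * ‖x u - x w‖) :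
    H s v y = r ^ (-(D * ((Fintype.card V : ℝ) - 2))) * H s v x := by
  rw [← sum_erase hs v, ← Finset.sum_neg_distrib, Real.rpow_sum_of_pos hr]
  unfold H
  rw [← Finset.prod_mul_distrib]
  refine Finset.prod_congr rfl fun u hu => ?_
  rw [← Finset.sum_neg_distrib, Real.rpow_sum_of_pos hr, ← Finset.prod_mul_distrib]
  refine Finset.prod_congr rfl fun w hw => ?_
  rw [h u w (Finset.ne_of_mem_erase hu) (Finset.ne_of_mem_erase hw),
    Real.mul_rpow hr.le (norm_nonneg _)]

lemma erase_eq (v a : V) (hva : v ≠ a) :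
    (Finset.univ.erase v : Finset V) = insert a ({v, a}ᶜ) := by
  ext u
  simp only [Finset.mem_erase, Finset.mem_univ, and_true, Finset.mem_insert, Finset.mem_compl,
    Finset.mem_singleton, not_or]
  by_cases h : u = a
  · subst h; simp [hva.symm]
  · simp [h]

lemma H_split {s : V → V → ℝ} (hs : Good D s) (v a : V) (hva : v ≠ a) (y : V → Eu D)
    (hy : y a = 0) :
    H s v y = (∏ u ∈ ({v, a}ᶜ : Finset V), (‖y u‖ ^ (-(s u a)) * ‖y u‖ ^ (-(s u a)))) *
      ∏ u ∈ ({v, a}ᶜ : Finset V), ∏ w ∈ ({v, a}ᶜ : Finset V), ‖y u - y w‖ ^ (-(s u w)) := by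
  unfold H
  have hn : a ∉ ({v, a}ᶜ : Finset V) := by simp
  rw [erase_eq v a hva, Finset.prod_insert hn, Finset.prod_insert hn]
  simp_rw [Finset.prod_insert hn]
  rw [Finset.prod_mul_distrib, Finset.prod_mul_distrib]
  simp only [hy, hs.diag, sub_zero, zero_sub, norm_neg, neg_zero, Real.rpow_zero, one_mul]
  rw [mul_assoc]
  congr 1
  refine Finset.prod_congr rfl fun u _ => ?_
  rw [hs.symm a u]

lemma H_inv {s : V → V → ℝ} (hs : Good D s) (v a : V) (hva : v ≠ a) (x : V → Eu D)
    (hxa : x a = 0) (hxv : x v = 0) (hx : ∀ u ∈ ({v, a}ᶜ : Finset V), x u ≠ 0) :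
    H s v (fun u => inv0 (x u)) * ∏ u ∈ ({v, a}ᶜ : Finset V), ‖x u‖ ^ (-(2 * D : ℝ)) =
      H s a x := by
  rw [H_split hs v a hva _ (by simp [hxa, inv0_zero]), H_split hs a v hva.symm x hxv]
  rw [show ({a, v} : Finset V) = {v, a} from Finset.pair_comm a v]
  set C : Finset V := {v, a}ᶜ with hC
  have hpos : ∀ u ∈ C, 0 < ‖x u‖ := fun u hu => norm_pos_iff.mpr (hx u hu)
  have hsum : ∀ u, ∑ w ∈ C, s u w = D - s u a - s u v := by
    intro u
    have h1 : ∑ w ∈ (Finset.univ.erase v : Finset V), s u w = D - s u v := by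
      rw [← hs.deg u, ← Finset.add_sum_erase _ _ (Finset.mem_univ v)]
      ring
    rw [erase_eq v a hva, Finset.sum_insert (by simp)] at h1
    linarith
  have e1 : ∏ u ∈ C, ∏ w ∈ C, ‖inv0 (x u) - inv0 (x w)‖ ^ (-(s u w)) =
      (∏ u ∈ C, (‖x u‖ ^ (D - s u a - s u v) * ‖x u‖ ^ (D - s u a - s u v))) *
        ∏ u ∈ C, ∏ w ∈ C, ‖x u - x w‖ ^ (-(s u w)) := by
    have e2 : ∏ u ∈ C, ∏ w ∈ C, ‖inv0 (x u) - inv0 (x w)‖ ^ (-(s u w)) =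
        ∏ u ∈ C, ∏ w ∈ C, (‖x u‖ ^ (s u w) * ‖x w‖ ^ (s u w) * ‖x u - x w‖ ^ (-(s u w))) := by
      refine Finset.prod_congr rfl fun u hu => Finset.prod_congr rfl fun w hw => ?_
      have h1 := (hpos u hu).le
      have h2 := (hpos w hw).le
      rw [norm_inv0_sub _ _ (hx u hu) (hx w hw), Real.mul_rpow (by positivity) (by positivity),
        Real.mul_rpow (by positivity) (by positivity), Real.inv_rpow h1, Real.inv_rpow h2,
        ← Real.rpow_neg h1, ← Real.rpow_neg h2, neg_neg]
    rw [e2]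
    simp_rw [Finset.prod_mul_distrib]
    congr 1
    have e3 : ∏ u ∈ C, ∏ w ∈ C, ‖x w‖ ^ (s u w) = ∏ u ∈ C, ∏ w ∈ C, ‖x u‖ ^ (s u w) := by
      rw [Finset.prod_comm]
      exact Finset.prod_congr rfl fun u _ => Finset.prod_congr rfl fun w _ => by rw [hs.symm]
    have e4 : ∏ u ∈ C, ∏ w ∈ C, ‖x u‖ ^ (s u w) = ∏ u ∈ C, ‖x u‖ ^ (D - s u a - s u v) := by
      refine Finset.prod_congr rfl fun u hu => ?_
      rw [← Real.rpow_sum_of_pos (hpos u hu), hsum]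
    rw [e3, e4]
  rw [e1, mul_comm, ← mul_assoc, ← mul_assoc, ← Finset.prod_mul_distrib, ← Finset.prod_mul_distrib]
  congr 1
  refine Finset.prod_congr rfl fun u hu => ?_
  have h0 := hpos u hu
  rw [norm_inv0, Real.inv_rpow h0.le, ← Real.rpow_neg h0.le, neg_neg]
  simp_rw [← Real.rpow_add h0]
  congr 1
  ring

/-- The period with a shell condition in place of a fixed vector. -/
noncomputable def Z (s : V → V → ℝ) (v a b : V) (φ : Eu D → ℝ≥0∞) : ℝ≥0∞ :=
  ∫⁻ x, ENNReal.ofReal (H s v x) * φ (x b) ∂(PS D ({v, a}ᶜ))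

/-- The period with `x_b = w`. -/
noncomputable def Pg (s : V → V → ℝ) (v a b : V) (w : Eu D) : ℝ≥0∞ :=
  ∫⁻ x, ENNReal.ofReal (H s v (Function.update x b w)) ∂(PS D ({v, a, b}ᶜ))

lemma card_two (v a : V) (hva : v ≠ a) : ({v, a}ᶜ : Finset V).card = Fintype.card V - 2 := by
  rw [Finset.card_compl, Finset.card_pair hva]

lemma meas_Hmul (s : V → V → ℝ) (v : V) (g : (V → Eu D) → ℝ≥0∞) (hg : Measurable g) :
    Measurable (fun x : V → Eu D => ENNReal.ofReal (H s v x) * g x) :=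
  (meas_Hn s v).mul hg

lemma meas_upd (b : V) (w : Eu D) : Measurable (fun x : V → Eu D => Function.update x b w) :=
  (meas_update b).comp (measurable_const.prodMk measurable_id)

lemma meas_Hupd (s : V → V → ℝ) (v b : V) (w : Eu D) :
    Measurable (fun x : V → Eu D => ENNReal.ofReal (H s v (Function.update x b w))) :=
  (meas_Hn s v).comp (meas_upd b w)

lemma Z_scale {s : V → V → ℝ} (hs : Good D s) (hV : 4 ≤ Fintype.card V) (v a : V) (hva : v ≠ a)
    (g : (V → Eu D) → ℝ≥0∞) (hg : Measurable g) (r : ℝ) (hr : 0 < r) :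
    ∫⁻ x, ENNReal.ofReal (H s v x) * g x ∂(PS D ({v, a}ᶜ)) =
    ∫⁻ x, ENNReal.ofReal (H s v x) * g (fun u => r • x u) ∂(PS D ({v, a}ᶜ)) := by
  rw [lintegral_cv (fun x => r • (LinearIsometryEquiv.refl ℝ (Eu D)) x)
    (fun _ => ENNReal.ofReal (r ^ D)) (measurable_const_smul r) measurable_const
    (cv_sim r hr (LinearIsometryEquiv.refl ℝ (Eu D))) _ _ (meas_Hmul s v g hg)]
  apply lintegral_congr_ae
  filter_upwards [ae_zero (D := D) ({v, a}ᶜ : Finset V)] with x hx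
  have e1 : (fun u => if u ∈ ({v, a}ᶜ : Finset V) then r • (LinearIsometryEquiv.refl ℝ (Eu D)) (x u)
      else x u) = fun u => r • x u := by
    funext u
    split_ifs with h
    · rfl
    · rw [hx u h, smul_zero]
  simp only [e1]
  rw [H_scale hs v r hr x (fun u => r • x u) (fun u w _ _ => by
    rw [← smul_sub, norm_smul, Real.norm_of_nonneg hr.le]), Finset.prod_const, card_two v a hva,
    ← ENNReal.ofReal_pow (by positivity), mul_right_comm, ← ENNReal.ofReal_mul
      (mul_nonneg (Real.rpow_nonneg hr.le _) (H_nonneg s v x)), mul_right_comm, ← pow_mul,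
    ← Real.rpow_natCast, ← Real.rpow_add hr]
  congr 2
  rw [Nat.cast_mul, Nat.cast_sub (by omega)]
  simp

lemma Z_dyadic {s : V → V → ℝ} (hs : Good D s) (hD : 3 ≤ D) (hV : 4 ≤ Fintype.card V)
    (v a b c : V) (hva : v ≠ a) (hb : b ∈ ({v, a}ᶜ : Finset V)) (hc : c ∈ ({v, a}ᶜ : Finset V))
    (φ ψ : Eu D → ℝ≥0∞) (hφ : Measurable φ) (hψ : Measurable ψ) (dφ : Dyadic0 φ)
    (dψ : Dyadic0 ψ) : Z s v a b φ = Z s v a c ψ := by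
  have hva' : ∀ᵐ x ∂(PS D ({v, a}ᶜ : Finset V)), x b ≠ 0 ∧ x c ≠ 0 := by
    filter_upwards [ae_zero (D := D) ({v, a}ᶜ : Finset V), ae_ne hD ({v, a}ᶜ : Finset V)]
      with x h1 h2
    have hv0 : x v = 0 := h1 v (by simp)
    refine ⟨?_, ?_⟩
    · rw [← hv0]; exact h2 b v hb (by rintro rfl; simp at hb)
    · rw [← hv0]; exact h2 c v hc (by rintro rfl; simp at hc)
  have mφ : ∀ n : ℤ, Measurable (fun x : V → Eu D => φ ((2 : ℝ) ^ n • x b)) := fun n =>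
    hφ.comp ((measurable_const_smul ((2 : ℝ) ^ n)).comp (measurable_pi_apply b))
  have mψ : ∀ n : ℤ, Measurable (fun x : V → Eu D => ψ ((2 : ℝ) ^ n • x c)) := fun n =>
    hψ.comp ((measurable_const_smul ((2 : ℝ) ^ n)).comp (measurable_pi_apply c))
  have mφ0 : Measurable (fun x : V → Eu D => φ (x b)) := hφ.comp (measurable_pi_apply b)
  have mψ0 : Measurable (fun x : V → Eu D => ψ (x c)) := hψ.comp (measurable_pi_apply c)
  have e1 : Z s v a b φ = ∑' n : ℤ, ∫⁻ x, ENNReal.ofReal (H s v x) *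
      (φ (x b) * ψ ((2 : ℝ) ^ n • x c)) ∂(PS D ({v, a}ᶜ)) := by
    rw [← lintegral_tsum (fun n => (meas_Hmul s v (fun x => φ (x b) * ψ ((2 : ℝ) ^ n • x c)) (mφ0.mul (mψ n))).aemeasurable)]
    apply lintegral_congr_ae
    filter_upwards [hva'] with x hx
    rw [ENNReal.tsum_mul_left, ENNReal.tsum_mul_left, dψ _ hx.2, mul_one]
  have e2 : Z s v a c ψ = ∑' n : ℤ, ∫⁻ x, ENNReal.ofReal (H s v x) *
      (φ ((2 : ℝ) ^ n • x b) * ψ (x c)) ∂(PS D ({v, a}ᶜ)) := by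
    rw [← lintegral_tsum (fun n => (meas_Hmul s v (fun x => φ ((2 : ℝ) ^ n • x b) * ψ (x c)) ((mφ n).mul mψ0)).aemeasurable)]
    apply lintegral_congr_ae
    filter_upwards [hva'] with x hx
    rw [ENNReal.tsum_mul_left, ENNReal.tsum_mul_right, dφ _ hx.1, one_mul]
  rw [e1, e2, ← (Equiv.neg ℤ).tsum_eq]
  apply tsum_congr
  intro n
  rw [Z_scale hs hV v a hva (fun x => φ (x b) * ψ ((2 : ℝ) ^ ((Equiv.neg ℤ) n) • x c))
    (mφ0.mul (mψ _)) ((2 : ℝ) ^ n) (by positivity)]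
  apply lintegral_congr
  intro x
  simp only [Equiv.neg_apply, smul_smul, zpow_neg]
  rw [inv_mul_cancel₀ (by positivity), one_smul]

lemma Z_inv {s : V → V → ℝ} (hs : Good D s) (hD : 3 ≤ D)
    (v a b : V) (hva : v ≠ a) (φ : Eu D → ℝ≥0∞) (hφ : Measurable φ) :
    Z s v a b φ = Z s a v b (fun z => φ (inv0 z)) := by
  unfold Z
  have mφ0 : Measurable (fun x : V → Eu D => φ (x b)) := hφ.comp (measurable_pi_apply b)
  rw [lintegral_cv inv0 (fun x => ENNReal.ofReal (‖x‖ ^ (-(2 * D : ℝ)))) meas_inv0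
    (ENNReal.measurable_ofReal.comp (measurable_norm.pow_const _)) (fun f _ => cv_inv hD f) _ _
    (meas_Hmul s v _ mφ0), Finset.pair_comm a v]
  apply lintegral_congr_ae
  filter_upwards [ae_zero (D := D) ({v, a}ᶜ : Finset V), ae_ne hD ({v, a}ᶜ : Finset V)]
      with x hx hx2
  have e1 : (fun u => if u ∈ ({v, a}ᶜ : Finset V) then inv0 (x u)
      else x u) = fun u => inv0 (x u) := by
    funext u
    split_ifs with h
    · rfl
    · rw [hx u h, inv0_zero]
  have hxv : x v = 0 := hx v (by simp)
  have hxa : x a = 0 := hx a (by simp)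
  have hne : ∀ u ∈ ({v, a}ᶜ : Finset V), x u ≠ 0 := by
    intro u hu
    rw [← hxv]
    exact hx2 u v hu (by rintro rfl; simp at hu)
  have e2 := congrFun e1 b
  simp only [e1, e2]
  rw [← H_inv hs v a hva x hxa hxv hne, ENNReal.ofReal_mul (H_nonneg _ _ _),
    ENNReal.ofReal_prod_of_nonneg (fun u _ => Real.rpow_nonneg (norm_nonneg _) _)]
  ring

lemma card_three (v a b : V) (hva : v ≠ a) (hvb : v ≠ b) (hab : a ≠ b) :
    ({v, a, b}ᶜ : Finset V).card = Fintype.card V - 3 := by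
  rw [Finset.card_compl, Finset.card_eq_three.mpr ⟨v, a, b, hva, hvb, hab, rfl⟩]

lemma Pg_sim {s : V → V → ℝ} (hs : Good D s) (hV : 4 ≤ Fintype.card V)
    (v a b : V) (hva : v ≠ a) (hvb : v ≠ b) (hab : a ≠ b) (e w : Eu D) (he : ‖e‖ = 1)
    (hw : w ≠ 0) :
    Pg s v a b w = ENNReal.ofReal (‖w‖ ^ (-(D : ℝ))) * Pg s v a b e := by
  have hr : 0 < ‖w‖ := norm_pos_iff.mpr hw
  set r := ‖w‖ with hrdef
  obtain ⟨R, hR⟩ : ∃ R : Eu D ≃ₗᵢ[ℝ] Eu D, R e = r⁻¹ • w := by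
    refine ⟨(ℝ ∙ (e - r⁻¹ • w))ᗮ.reflection, Submodule.reflection_sub ?_⟩
    rw [norm_smul, norm_inv, Real.norm_of_nonneg hr.le, ← hrdef, inv_mul_cancel₀ hr.ne', he]
  unfold Pg
  rw [lintegral_cv (fun x => r • R x)
    (fun _ => ENNReal.ofReal (r ^ D)) (R.continuous.measurable.const_smul r) measurable_const
    (cv_sim r hr R) _ _ (meas_Hupd s v b w),
    ← lintegral_const_mul _ (meas_Hupd s v b e)]
  apply lintegral_congr_ae
  filter_upwards [ae_zero (D := D) ({v, a, b}ᶜ : Finset V)] with x hx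
  have e1 : Function.update (fun u => if u ∈ ({v, a, b}ᶜ : Finset V) then r • R (x u)
      else x u) b w = fun u => r • R (Function.update x b e u) := by
    funext u
    by_cases hub : u = b
    · subst hub
      simp only [Function.update_self]
      rw [hR, smul_smul, mul_inv_cancel₀ hr.ne', one_smul]
    · simp only [Function.update_of_ne hub]
      split_ifs with h
      · rfl
      · rw [hx u h, map_zero, smul_zero]
  simp only [e1]
  rw [H_scale hs v r hr (Function.update x b e) (fun u => r • R (Function.update x b e u))
    (fun u w _ _ => by
    rw [← smul_sub, ← map_sub, norm_smul, Real.norm_of_nonneg hr.le, R.norm_map]),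
    Finset.prod_const, card_three v a b hva hvb hab,
    ← ENNReal.ofReal_pow (by positivity), ← ENNReal.ofReal_mul
      (mul_nonneg (Real.rpow_nonneg hr.le _) (H_nonneg s v _)), mul_right_comm, ← pow_mul,
    ← Real.rpow_natCast, ← Real.rpow_add hr, ENNReal.ofReal_mul (Real.rpow_nonneg hr.le _)]
  congr 3
  rw [Nat.cast_mul, Nat.cast_sub (by omega)]
  push_cast
  ring

lemma Z_eq {s : V → V → ℝ} (hs : Good D s) (hD : 3 ≤ D) (hV : 4 ≤ Fintype.card V)
    (v a b : V) (hva : v ≠ a) (hvb : v ≠ b) (hab : a ≠ b) (e : Eu D) (he : ‖e‖ = 1) :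
    Z (D := D) s v a b shell = Kc D * Pg s v a b e := by
  have : Nonempty (Fin D) := ⟨⟨0, by omega⟩⟩
  have : Nontrivial (Eu D) := inferInstance
  unfold Z
  have hins : ({v, a}ᶜ : Finset V) = insert b ({v, a, b}ᶜ) := by
    ext u
    simp only [Finset.mem_insert, Finset.mem_compl, Finset.mem_singleton, not_or]
    by_cases h : u = b
    · subst h; simp [hvb.symm, hab.symm]
    · simp [h]
  have mφ0 : Measurable (fun x : V → Eu D => shell (x b)) := meas_shell.comp (measurable_pi_apply b)
  rw [hins, lintegral_update _ b (by simp) _ (meas_Hmul s v _ mφ0)]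
  unfold Kc
  rw [← lintegral_mul_const _ (by
    refine meas_shell.mul ?_
    exact ENNReal.measurable_ofReal.comp (measurable_norm.pow_const _))]
  apply lintegral_congr_ae
  filter_upwards [Measure.ae_ne volume (0 : Eu D)] with w hw
  simp only [Function.update_self]
  rw [lintegral_mul_const _ (meas_Hupd s v b w)]
  have := Pg_sim hs hV v a b hva hvb hab e w he hw
  unfold Pg at this ⊢
  rw [this]
  ring

lemma Pg_swap {s : V → V → ℝ} (hs : Good D s) 
    (v a b : V) (hva : v ≠ a) (hvb : v ≠ b) (hab : a ≠ b) (e : Eu D) :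
    Pg s v a b e = Pg s v b a e := by
  unfold Pg
  rw [lintegral_cv (fun x => e - x) (fun _ => 1) (measurable_const.sub measurable_id)
    measurable_const (fun f _ => cv_refl e f) _ _ (meas_Hupd s v b e),
    Finset.pair_comm b a]
  apply lintegral_congr_ae
  filter_upwards [ae_zero (D := D) ({v, a, b}ᶜ : Finset V)] with x hx
  simp only [Finset.prod_const_one, mul_one]
  congr 1
  rw [H_scale hs v 1 one_pos (Function.update x a e) _ ?_]
  · simp
  · have key : ∀ u, u ≠ v → Function.update (fun u => if u ∈ ({v, a, b}ᶜ : Finset V) then e - x u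
        else x u) b e u = e - Function.update x a e u := by
      intro u huv
      have hxa : x a = 0 := hx a (by simp)
      have hxb : x b = 0 := hx b (by simp)
      by_cases hub : u = b
      · subst hub
        simp [Function.update_of_ne hab.symm, hxb]
      · rw [Function.update_of_ne hub]
        by_cases hua : u = a
        · subst hua; simp [hxa]
        · rw [Function.update_of_ne hua, if_pos]
          simp [huv, hua, hub]
    intro u w hu hw
    rw [key u hu, key w hw, one_mul, sub_sub_sub_cancel_left, norm_sub_rev]

end Period

end PartD

section PartE
open MeasureTheory
open scoped ENNReal

namespace Period

set_option linter.unusedSectionVars false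

variable {D : ℕ} {V : Type} [Fintype V] [DecidableEq V]

lemma gap {s : V → V → ℝ} (hs : Good D s)
    (hp : ∀ S : Finset V, 2 ≤ S.card → 2 ≤ Sᶜ.card → (D : ℝ) < ∑ u ∈ S, ∑ w ∈ Sᶜ, s u w) :
    ∃ ε : ℝ, 0 < ε ∧ ∀ S : Finset V, 2 ≤ S.card → 2 ≤ Sᶜ.card →
      ∑ u ∈ S, ∑ w ∈ S, s u w ≤ D * ((S.card : ℝ) - 1) - ε := by
  have hcut : ∀ S : Finset V, ∑ u ∈ S, ∑ w ∈ S, s u w =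
      D * (S.card : ℝ) - ∑ u ∈ S, ∑ w ∈ Sᶜ, s u w := by
    intro S
    have : ∑ u ∈ S, (∑ w ∈ S, s u w + ∑ w ∈ Sᶜ, s u w) = D * (S.card : ℝ) := by
      rw [Finset.sum_congr rfl (fun u _ => (Finset.sum_add_sum_compl S (s u)).trans (hs.deg u))]
      rw [Finset.sum_const, nsmul_eq_mul, mul_comm]
    rw [Finset.sum_add_distrib] at this
    linarith
  set F : Finset (Finset V) := Finset.univ.filter (fun S => 2 ≤ S.card ∧ 2 ≤ Sᶜ.card) with hF
  rcases F.eq_empty_or_nonempty with h | h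
  · refine ⟨1, one_pos, fun S h1 h2 => ?_⟩
    have : S ∈ F := by simp [hF, h1, h2]
    rw [h] at this
    simp at this
  · obtain ⟨S0, hS0, hmin⟩ := F.exists_min_image (fun S => ∑ u ∈ S, ∑ w ∈ Sᶜ, s u w) h
    rw [hF, Finset.mem_filter] at hS0
    refine ⟨∑ u ∈ S0, ∑ w ∈ S0ᶜ, s u w - D, sub_pos.mpr (hp S0 hS0.2.1 hS0.2.2), fun S h1 h2 => ?_⟩
    have := hmin S (by simp [hF, h1, h2])
    rw [hcut S]
    linarith

lemma seq_bound (s : ℕ → ℕ → ℝ) (y : ℕ → Eu D) (q : ℕ → ℕ) (N : ℕ) (hN : 2 ≤ N) (ε : ℝ)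
    (hε : 0 ≤ ε) (hs : ∀ i j, 0 ≤ s i j) (hs0 : ∀ i, s i i = 0)
    (hE : ∀ p q, p + 2 ≤ q → q ≤ N → ¬ (p = 0 ∧ q = N) →
      ∑ i ∈ Finset.Ico p q, ∑ j ∈ Finset.Ico p q, s i j ≤ (D : ℝ) * ((q : ℝ) - p - 1) - ε)
    (hfull : ∑ i ∈ Finset.Ico 0 N, ∑ j ∈ Finset.Ico 0 N, s i j = (D : ℝ) * ((N : ℝ) - 1))
    (hy : ∀ i < N, ∀ j < N, i ≠ j → y i ≠ y j)
    (hq : ∀ k, 0 < k → k < N → q k < k)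
    (hmin : ∀ k, 0 < k → ∀ i < k, ∀ j, k ≤ j → j < N → ‖y k - y (q k)‖ ≤ ‖y j - y i‖)
    (jb : ℕ) (hjb : 0 < jb) (hjbN : jb < N) (h1 : 1 ≤ ‖y jb - y 0‖) (h2 : ‖y jb - y 0‖ < 2) :
    (D : ℝ) * ∑ k ∈ Finset.Ico 1 N, Real.log ‖y k - y (q k)‖ +
      (ε / ((N : ℝ) - 1)) * ∑ k ∈ Finset.Ico 1 N, |Real.log ‖y k - y (q k)‖| -
      ε * (Real.log 2 + Real.log ((N : ℝ) - 1)) ≤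
    ∑ i ∈ Finset.Ico 0 N, ∑ j ∈ Finset.Ico 0 N, s i j * Real.log ‖y i - y j‖ := by
  obtain ⟨f, hf, hfmax⟩ := (Finset.Icc 1 jb).exists_max_image (fun k => ‖y k - y (q k)‖)
    ⟨1, by simp; omega⟩
  rw [Finset.mem_Icc] at hf
  have hN1 : (1 : ℝ) ≤ (N : ℝ) - 1 := by
    have : (2 : ℝ) ≤ N := by exact_mod_cast hN
    linarith
  have hpos : ∀ k, 0 < k → k < N → 0 < ‖y k - y (q k)‖ := by
    intro k hk hkN
    have := hq k hk hkN
    exact norm_pos_iff.mpr (sub_ne_zero.mpr (hy k hkN _ (by omega) (by omega)))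
  have hfp := hpos f (by omega) (by omega)
  have hf2 : ‖y f - y (q f)‖ < 2 := (hmin f (by omega) 0 (by omega) jb hf.2 hjbN).trans_lt h2
  have hind : ∀ k, k ≤ jb → ‖y k - y 0‖ ≤ k * ‖y f - y (q f)‖ := by
    intro k
    induction k using Nat.strong_induction_on with
    | _ k ih =>
      intro hk
      rcases Nat.eq_zero_or_pos k with rfl | hk0
      · simp
      · have hqk := hq k hk0 (by omega)
        have a1 := ih (q k) hqk (by omega)
        have a2 := hfmax k (by rw [Finset.mem_Icc]; omega)
        have a3 : ‖y k - y 0‖ ≤ ‖y k - y (q k)‖ + ‖y (q k) - y 0‖ := norm_sub_le_norm_sub_add_norm_sub _ _ _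
        have a4 : ((q k : ℝ) + 1) ≤ k := by exact_mod_cast hqk
        nlinarith
  have hf1 : 1 ≤ ((N : ℝ) - 1) * ‖y f - y (q f)‖ := by
    have a1 := hind jb le_rfl
    have a2 : (jb : ℝ) + 1 ≤ N := by exact_mod_cast hjbN
    nlinarith
  have hl2 : 0 ≤ Real.log 2 := Real.log_nonneg (by norm_num)
  have hlN : 0 ≤ Real.log ((N : ℝ) - 1) := Real.log_nonneg hN1
  have hLf : |Real.log ‖y f - y (q f)‖| ≤ Real.log 2 + Real.log ((N : ℝ) - 1) := by
    rw [abs_le]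
    have b1 : Real.log ‖y f - y (q f)‖ ≤ Real.log 2 := Real.log_le_log hfp hf2.le
    have b2 : 0 ≤ Real.log ((N : ℝ) - 1) + Real.log ‖y f - y (q f)‖ := by
      rw [← Real.log_mul (by linarith) hfp.ne']
      exact Real.log_nonneg hf1
    constructor <;> linarith
  have hc : ∀ k ∈ Finset.Ico 1 N, (D : ℝ) * ∑ k ∈ Finset.Ico 1 N, Real.log ‖y k - y (q k)‖ +
      ε * |Real.log ‖y k - y (q k)‖| - ε * (Real.log 2 + Real.log ((N : ℝ) - 1)) ≤
      ∑ i ∈ Finset.Ico 0 N, ∑ j ∈ Finset.Ico 0 N, s i j * Real.log ‖y i - y j‖ := by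
    intro k hk
    rw [Finset.mem_Ico] at hk
    have := cart_full s (fun i j => Real.log ‖y i - y j‖) (fun k => Real.log ‖y k - y (q k)‖) D ε N
      hN hε hs hs0 (by
        intro i j k hik hkj hj
        have c1 := hpos k (by omega) (by omega)
        have c2 := hmin k (by omega) i hik j hkj hj
        refine ⟨?_, Real.log_le_log c1 c2⟩
        rw [norm_sub_rev (y i)]
        exact Real.log_le_log c1 c2) hE hfull k f (by omega) hk.2 (by omega) (by omega)
    have d1 : |Real.log ‖y k - y (q k)‖| - |Real.log ‖y f - y (q f)‖| ≤
      |Real.log ‖y k - y (q k)‖ - Real.log ‖y f - y (q f)‖| := abs_sub_abs_le_abs_sub _ _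
    have d2 := mul_le_mul_of_nonneg_left d1 hε
    have d3 := mul_le_mul_of_nonneg_left hLf hε
    linarith
  have hsum := Finset.sum_le_sum hc
  rw [Finset.sum_sub_distrib, Finset.sum_add_distrib, Finset.sum_const, Finset.sum_const,
    Finset.sum_const, Nat.card_Ico, ← Finset.mul_sum] at hsum
  simp only [nsmul_eq_mul] at hsum
  rw [Nat.cast_sub (by omega), Nat.cast_one] at hsum
  have hNp : (0 : ℝ) < (N : ℝ) - 1 := by linarith
  refine le_of_mul_le_mul_left ?_ hNp
  refine le_trans (le_of_eq ?_) hsum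
  field_simp

end Period

end PartE

section PartF
open MeasureTheory
open scoped ENNReal

namespace Period

set_option linter.unusedSectionVars false

variable {D : ℕ} {V : Type} [Fintype V] [DecidableEq V]

lemma H_exp {s : V → V → ℝ} (hs : Good D s) (v : V) (x : V → Eu D)
    (hx : ∀ u w, u ≠ v → w ≠ v → u ≠ w → x u ≠ x w) :
    H s v x = Real.exp (-∑ u ∈ Finset.univ.erase v, ∑ w ∈ Finset.univ.erase v,
      s u w * Real.log ‖x u - x w‖) := by
  unfold H
  rw [← Finset.sum_neg_distrib, Real.exp_sum]
  refine Finset.prod_congr rfl fun u hu => ?_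
  rw [← Finset.sum_neg_distrib, Real.exp_sum]
  refine Finset.prod_congr rfl fun w hw => ?_
  by_cases h : u = w
  · subst h
    simp [hs.diag]
  · rw [Real.rpow_def_of_pos (norm_pos_iff.mpr (sub_ne_zero.mpr
      (hx u w (Finset.ne_of_mem_erase hu) (Finset.ne_of_mem_erase hw) h)))]
    congr 1
    ring

lemma pointwise {s : V → V → ℝ} (hs : Good D s) (hV : 4 ≤ Fintype.card V) (ε : ℝ) (hε : 0 < ε)
    (hgap : ∀ S : Finset V, 2 ≤ S.card → 2 ≤ Sᶜ.card →
      ∑ u ∈ S, ∑ w ∈ S, s u w ≤ D * ((S.card : ℝ) - 1) - ε)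
    (v a b : V) (hva : v ≠ a) (hvb : v ≠ b) (hab : a ≠ b) (x : V → Eu D)
    (hx : ∀ u w, u ≠ v → w ≠ v → u ≠ w → x u ≠ x w) (hxa : x a = 0)
    (h1 : 1 ≤ ‖x b‖) (h2 : ‖x b‖ < 2) :
    ∃ (p : V → V), (∃ r : V → ℕ, ∀ u ∈ ({v, a}ᶜ : Finset V), r (p u) < r u) ∧
      H s v x ≤ Real.exp (ε * (Real.log 2 + Real.log ((Fintype.card V : ℝ) - 2))) *
        ∏ u ∈ ({v, a}ᶜ : Finset V), gfun D (ε / ((Fintype.card V : ℝ) - 2)) (x u - x (p u)) := by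
  set U : Finset V := Finset.univ.erase v with hU
  have hUc : U.card = Fintype.card V - 1 := by
    rw [hU, Finset.card_erase_of_mem (Finset.mem_univ v), Finset.card_univ]
  have haU : a ∈ U := by simp [hU, hva.symm]
  set N := Fintype.card V - 1 with hN
  obtain ⟨σ, p, hσ0, hσU, hσi, hp⟩ := prim (fun u w => ‖x u - x w‖) U a haU (N - 1) (by omega)
  have hq' : ∀ k, ∃ i, 0 < k → k ≤ N - 1 → i < k ∧ p k = σ i := by
    intro k
    by_cases hk : 0 < k ∧ k ≤ N - 1
    · obtain ⟨i, h, h'⟩ := (hp k hk.1 hk.2).1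
      exact ⟨i, fun _ _ => ⟨h, h'⟩⟩
    · exact ⟨0, fun h h' => absurd ⟨h, h'⟩ hk⟩
  choose q hq using hq'
  have hinj : ∀ i < N, ∀ j < N, σ i = σ j → i = j := fun i hi j hj h =>
    hσi i (by omega) j (by omega) h
  have himg : (Finset.Ico 0 N).image σ = U := by
    apply Finset.eq_of_subset_of_card_le
    · intro u hu
      obtain ⟨i, hi, rfl⟩ := Finset.mem_image.mp hu
      rw [Finset.mem_Ico] at hi
      exact hσU i (by omega)
    · rw [Finset.card_image_of_injOn, Nat.card_Ico, hUc]
      · omega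
      · intro i hi j hj h
        simp only [Finset.coe_Ico, Set.mem_Ico] at hi hj
        exact hinj i hi.2 j hj.2 h
  have hsumI : ∀ (p q : ℕ), q ≤ N → ∀ g : V → ℝ, ∑ u ∈ (Finset.Ico p q).image σ, g u =
      ∑ i ∈ Finset.Ico p q, g (σ i) := by
    intro p q hqN g
    apply Finset.sum_image
    intro i hi j hj h
    simp only [Finset.coe_Ico, Set.mem_Ico] at hi hj
    exact hinj i (by omega) j (by omega) h
  have hcardI : ∀ (p q : ℕ), q ≤ N → ((Finset.Ico p q).image σ).card = q - p := by
    intro p q hqN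
    rw [Finset.card_image_of_injOn, Nat.card_Ico]
    intro i hi j hj h
    simp only [Finset.coe_Ico, Set.mem_Ico] at hi hj
    exact hinj i (by omega) j (by omega) h
  have hσv : ∀ i < N, σ i ≠ v := fun i hi => Finset.ne_of_mem_erase (hσU i (by omega))
  have hbU : b ∈ U := by simp [hU, hvb.symm]
  rw [← himg] at hbU
  obtain ⟨jb, hjb, rfl⟩ := Finset.mem_image.mp hbU
  rw [Finset.mem_Ico] at hjb
  have hjb0 : 0 < jb := by
    rcases Nat.eq_zero_or_pos jb with h | h
    · subst h; exact absurd hσ0.symm hab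
    · exact h
  have hcN : (N : ℝ) = (Fintype.card V : ℝ) - 1 := by
    rw [hN, Nat.cast_sub (by omega)]; simp
  have key := seq_bound (D := D) (fun i j => s (σ i) (σ j)) (fun i => x (σ i)) q N (by omega) ε hε.le
    (fun i j => hs.nonneg _ _) (fun i => hs.diag _) (by
      intro p q hpq hqN hne
      have e0 := hgap ((Finset.Ico p q).image σ) (by rw [hcardI p q hqN]; omega) (by
        rw [Finset.card_compl, hcardI p q hqN]
        omega)
      rw [hcardI p q hqN, hsumI p q hqN, Nat.cast_sub (by omega)] at e0
      simp_rw [hsumI p q hqN] at e0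
      exact e0) (by
      have e0 := sum_erase hs v
      rw [← hU, ← himg, hsumI 0 N le_rfl] at e0
      simp_rw [hsumI 0 N le_rfl] at e0
      rw [e0, hcN]
      ring) (by
      intro i hi j hj hij
      exact hx _ _ (hσv i hi) (hσv j hj) (fun h => hij (hinj i hi j hj h)))
    (fun k hk hkN => (hq k hk (by omega)).1) (by
      intro k hk i hik j hkj hjN
      have e0 := (hp k hk (by omega)).2 i hik (σ j) (hσU j (by omega)) (by
        intro i' hi' h
        have := hinj j hjN i' (by omega) h
        omega)
      rw [(hq k hk (by omega)).2] at e0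
      exact e0) jb hjb0 hjb.2 (by simpa [hσ0, hxa] using h1) (by simpa [hσ0, hxa] using h2)
  -- ranks
  have hr' : ∀ u, ∃ i, u ≠ v → i < N ∧ σ i = u := by
    intro u
    by_cases h : u = v
    · exact ⟨0, fun h' => absurd h h'⟩
    · have : u ∈ U := by simp [hU, h]
      rw [← himg] at this
      obtain ⟨i, hi, hi'⟩ := Finset.mem_image.mp this
      rw [Finset.mem_Ico] at hi
      exact ⟨i, fun _ => ⟨hi.2, hi'⟩⟩
  choose r hr using hr'
  have hrσ : ∀ i < N, r (σ i) = i := by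
    intro i hi
    have := hr (σ i) (hσv i hi)
    exact hinj _ this.1 _ hi this.2
  have himg1 : (Finset.Ico 1 N).image σ = ({v, a}ᶜ : Finset V) := by
    ext u
    simp only [Finset.mem_image, Finset.mem_Ico, Finset.mem_compl, Finset.mem_insert,
      Finset.mem_singleton, not_or]
    constructor
    · rintro ⟨i, hi, rfl⟩
      refine ⟨hσv i hi.2, fun h => ?_⟩
      rw [← hσ0] at h
      have := hinj i hi.2 0 (by omega) h
      omega
    · rintro ⟨h, h'⟩
      refine ⟨r u, ⟨?_, (hr u h).1⟩, (hr u h).2⟩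
      rcases Nat.eq_zero_or_pos (r u) with h0 | h0
      · exfalso
        apply h'
        rw [← (hr u h).2, h0, hσ0]
      · exact h0
  refine ⟨fun u => σ (q (r u)), ⟨r, ?_⟩, ?_⟩
  · intro u hu
    rw [← himg1] at hu
    obtain ⟨k, hk, rfl⟩ := Finset.mem_image.mp hu
    rw [Finset.mem_Ico] at hk
    have := (hq k (by omega) (by omega)).1
    change r (σ (q (r (σ k)))) < r (σ k)
    rw [hrσ k hk.2, hrσ (q k) (by omega)]
    exact this
  · rw [H_exp hs v x hx, ← hU, ← himg1, ← himg, hsumI 0 N le_rfl]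
    simp_rw [hsumI 0 N le_rfl]
    rw [Finset.prod_image (by
      intro i hi j hj h
      simp only [Finset.coe_Ico, Set.mem_Ico] at hi hj
      exact hinj i (by omega) j (by omega) h)]
    unfold gfun
    rw [← Real.exp_sum, ← Real.exp_add, Real.exp_le_exp]
    have e1 : ∑ k ∈ Finset.Ico 1 N, (-((D : ℝ) * Real.log ‖x (σ k) - x (σ (q (r (σ k))))‖) -
        ε / ((Fintype.card V : ℝ) - 2) * |Real.log ‖x (σ k) - x (σ (q (r (σ k))))‖|) =
        ∑ k ∈ Finset.Ico 1 N, (-((D : ℝ) * Real.log ‖x (σ k) - x (σ (q k))‖) -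
        ε / ((Fintype.card V : ℝ) - 2) * |Real.log ‖x (σ k) - x (σ (q k))‖|) := by
      refine Finset.sum_congr rfl fun k hk => ?_
      rw [Finset.mem_Ico] at hk
      rw [hrσ k hk.2]
    rw [e1, Finset.sum_sub_distrib, Finset.sum_neg_distrib, ← Finset.mul_sum, ← Finset.mul_sum]
    rw [hcN, show (Fintype.card V : ℝ) - 1 - 1 = (Fintype.card V : ℝ) - 2 by ring] at key
    linarith

lemma Z_finite {s : V → V → ℝ} (hs : Good D s) (hD : 3 ≤ D) (hV : 4 ≤ Fintype.card V)
    (hp : ∀ S : Finset V, 2 ≤ S.card → 2 ≤ Sᶜ.card → (D : ℝ) < ∑ u ∈ S, ∑ w ∈ Sᶜ, s u w)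
    (v a b : V) (hva : v ≠ a) (hvb : v ≠ b) (hab : a ≠ b) :
    Z (D := D) s v a b shell < ⊤ := by
  classical
  obtain ⟨ε, hε, hgap⟩ := gap hs hp
  set δ := ε / ((Fintype.card V : ℝ) - 2) with hδ
  have hδ0 : 0 < δ := by
    have : (4 : ℝ) ≤ Fintype.card V := by exact_mod_cast hV
    exact div_pos hε (by linarith)
  set C := Real.exp (ε * (Real.log 2 + Real.log ((Fintype.card V : ℝ) - 2))) with hC
  set F : Finset (V → V) := Finset.univ.filter
    (fun p => ∃ r : V → ℕ, ∀ u ∈ ({v, a}ᶜ : Finset V), r (p u) < r u) with hF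
  have mg : Measurable (fun z : Eu D => ENNReal.ofReal (gfun D δ z)) :=
    ENNReal.measurable_ofReal.comp (meas_gfun δ)
  have hle : ∀ᵐ x ∂(PS D ({v, a}ᶜ : Finset V)), ENNReal.ofReal (H s v x) * shell (x b) ≤
      ENNReal.ofReal C * ∑ p ∈ F, ∏ u ∈ ({v, a}ᶜ : Finset V),
        ENNReal.ofReal (gfun D δ (x u - x (p u))) := by
    filter_upwards [ae_zero (D := D) ({v, a}ᶜ : Finset V), ae_ne hD ({v, a}ᶜ : Finset V)]
      with x hx hx2
    unfold shell
    split_ifs with hsh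
    · obtain ⟨p, hpF, hpH⟩ := pointwise hs hV ε hε hgap v a b hva hvb hab x (by
        intro u w hu hw huw
        by_cases hua : u = a
        · refine (hx2 w u ?_ huw).symm
          simp only [Finset.mem_compl, Finset.mem_insert, Finset.mem_singleton, not_or]
          exact ⟨hw, fun h => huw (hua.trans h.symm)⟩
        · exact hx2 u w (by simp [hu, hua]) huw.symm) (hx a (by simp)) hsh.1 hsh.2
      rw [mul_one]
      refine (ENNReal.ofReal_le_ofReal hpH).trans ?_
      rw [ENNReal.ofReal_mul (Real.exp_nonneg _)]
      gcongr
      have hg0 : ∀ u ∈ ({v, a}ᶜ : Finset V),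
          0 ≤ gfun D (ε / ((Fintype.card V : ℝ) - 2)) (x u - x (p u)) := fun u _ => by
        unfold gfun; exact Real.exp_nonneg _
      rw [ENNReal.ofReal_prod_of_nonneg hg0]
      exact Finset.single_le_sum
        (f := fun p : V → V => ∏ u ∈ ({v, a}ᶜ : Finset V), ENNReal.ofReal (gfun D δ (x u - x (p u))))
        (fun _ _ => bot_le) (show p ∈ F by simpa [hF] using hpF)
    · simp
  unfold Z
  refine (lintegral_mono_ae hle).trans_lt ?_
  have mp : ∀ p : V → V, Measurable (fun x : V → Eu D => ∏ u ∈ ({v, a}ᶜ : Finset V),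
      ENNReal.ofReal (gfun D δ (x u - x (p u)))) := fun p =>
    Finset.measurable_prod _ fun u _ =>
      mg.comp ((measurable_pi_apply u).sub (measurable_pi_apply (p u)))
  rw [lintegral_const_mul' _ _ ENNReal.ofReal_ne_top, lintegral_finsetSum _ (fun p _ => mp p)]
  refine ENNReal.mul_lt_top ENNReal.ofReal_lt_top (ENNReal.sum_lt_top.mpr fun p hpF => ?_)
  rw [hF, Finset.mem_filter] at hpF
  obtain ⟨-, r, hr⟩ := hpF
  rw [tree_integral (fun z => ENNReal.ofReal (gfun D δ z)) mg p r _ hr]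
  exact ENNReal.pow_lt_top (gfun_finite hD δ hδ0)

lemma Z_all {s : V → V → ℝ} (hs : Good D s) (hD : 3 ≤ D) (hV : 4 ≤ Fintype.card V)
    (v a b v' a' b' : V) (hva : v ≠ a) (hvb : v ≠ b) (hab : a ≠ b)
    (hva' : v' ≠ a') (hvb' : v' ≠ b') (hab' : a' ≠ b') :
    Z (D := D) s v a b shell = Z (D := D) s v' a' b' shell := by
  have : Nonempty (Fin D) := ⟨⟨0, by omega⟩⟩
  have : Nontrivial (Eu D) := inferInstance
  obtain ⟨e, he⟩ := exists_norm_eq (Eu D) (zero_le_one' ℝ)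
  have mem : ∀ v a b : V, v ≠ b → a ≠ b → b ∈ ({v, a}ᶜ : Finset V) := by
    intro v a b h1 h2; simp [h1.symm, h2.symm]
  -- independence of the third vertex
  have hb : ∀ v a b c : V, v ≠ a → v ≠ b → a ≠ b → v ≠ c → a ≠ c →
      Z (D := D) s v a b shell = Z (D := D) s v a c shell := fun v a b c h1 h2 h3 h4 h5 =>
    Z_dyadic hs hD hV v a b c h1 (mem v a b h2 h3) (mem v a c h4 h5) shell shell meas_shell
      meas_shell shell_dyadic shell_dyadic
  -- exchange of the first two
  have hsw : ∀ v a b : V, v ≠ a → v ≠ b → a ≠ b →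
      Z (D := D) s v a b shell = Z (D := D) s a v b shell := fun v a b h1 h2 h3 => by
    rw [Z_inv hs hD v a b h1 shell meas_shell]
    exact Z_dyadic hs hD hV a v b b h1.symm (mem a v b h3 h2) (mem a v b h3 h2) _ shell
      (meas_shell.comp meas_inv0) meas_shell shell_inv_dyadic shell_dyadic
  -- exchange of the last two
  have hsw2 : ∀ v a b : V, v ≠ a → v ≠ b → a ≠ b →
      Z (D := D) s v a b shell = Z (D := D) s v b a shell := fun v a b h1 h2 h3 => by
    rw [Z_eq hs hD hV v a b h1 h2 h3 e he, Z_eq hs hD hV v b a h2 h1 h3.symm e he,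
      Pg_swap hs v a b h1 h2 h3]
  -- change of the second vertex
  have ha : ∀ v a b c d : V, v ≠ a → v ≠ b → a ≠ b → v ≠ c → v ≠ d → c ≠ d →
      Z (D := D) s v a b shell = Z (D := D) s v c d shell := by
    intro v a b c d h1 h2 h3 h4 h5 h6
    by_cases hac : a = c
    · subst hac
      exact hb v a b d h1 h2 h3 h5 h6
    · rw [hb v a b c h1 h2 h3 h4 hac, hsw2 v a c h1 h4 hac,
        hb v c a d h4 h1 (Ne.symm hac) h5 h6]
  by_cases hvv : v = v'
  · subst hvv
    exact ha v a b a' b' hva hvb hab hva' hvb' hab'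
  · obtain ⟨w, hw⟩ : ∃ w, w ∉ ({v, v'} : Finset V) := by
      by_contra! h
      have : (Finset.univ : Finset V) ⊆ {v, v'} := fun w _ => h w
      have := Finset.card_le_card this
      rw [Finset.card_univ] at this
      have := this.trans Finset.card_le_two
      omega
    simp only [Finset.mem_insert, Finset.mem_singleton, not_or] at hw
    rw [ha v a b v' w hva hvb hab hvv (Ne.symm hw.1) (Ne.symm hw.2),
      hsw v v' w hvv (Ne.symm hw.1) (Ne.symm hw.2)]
    exact ha v' v w a' b' (Ne.symm hvv) (Ne.symm hw.2) (Ne.symm hw.1) hva' hvb' hab'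

/-- All periods agree and are finite. -/
lemma Pg_const {s : V → V → ℝ} (hs : Good D s) (hD : 3 ≤ D) (hV : 4 ≤ Fintype.card V)
    (hp : ∀ S : Finset V, 2 ≤ S.card → 2 ≤ Sᶜ.card → (D : ℝ) < ∑ u ∈ S, ∑ w ∈ Sᶜ, s u w) :
    ∃ c : ℝ≥0∞, c ≠ ⊤ ∧ ∀ v a b : V, v ≠ a → v ≠ b → a ≠ b → ∀ e : Eu D, ‖e‖ = 1 →
      Pg s v a b e = c := by
  have hcard : 2 < (Finset.univ : Finset V).card := by rw [Finset.card_univ]; omega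
  obtain ⟨v0, a0, b0, -, -, -, h1, h2, h3⟩ := Finset.two_lt_card_iff.mp hcard
  refine ⟨Z (D := D) s v0 a0 b0 shell / Kc D, ?_, ?_⟩
  · exact (ENNReal.div_lt_top (Z_finite hs hD hV hp v0 a0 b0 h1 h2 h3).ne (Kc_pos hD)).ne
  · intro v a b hva hvb hab e he
    rw [Z_all hs hD hV v0 a0 b0 v a b h1 h2 h3 hva hvb hab, Z_eq hs hD hV v a b hva hvb hab e he,
      mul_comm, ENNReal.mul_div_cancel_right (Kc_pos hD) Kc_fin]

end Period

end PartF

section PartG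
open MeasureTheory
open scoped ENNReal

namespace Period

set_option linter.unusedSectionVars false

variable {D : ℕ} {V : Type} [Fintype V] [DecidableEq V]

lemma edge_prod (G : SimpleGraph V) [DecidableRel G.Adj] (ν : V → V → ℝ)
    (hsym : ∀ u w, ν u w = ν w u) (hedge : ∀ u w, G.Adj u w → 0 < ν u w)
    (hnonedge : ∀ u w, ¬G.Adj u w → ν u w = 0) (lam : ℝ) (hlam : 0 < lam) (v : V) (x : V → Eu D)
    (hpf : ∀ u w, ‖x u - x w‖ ^ (-(lam * (ν u w + ν w u))) =
      ‖x w - x u‖ ^ (-(lam * (ν w u + ν u w)))) :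
    ∏ ed ∈ G.edgeFinset.filter (fun ed => v ∉ ed),
      Sym2.lift ⟨fun u w => ‖x u - x w‖ ^ (-(lam * (ν u w + ν w u))), hpf⟩ ed =
    H (fun u w => lam * ν u w) v x := by
  unfold H
  rw [← Finset.prod_product']
  set U : Finset V := Finset.univ.erase v with hU
  have h1 : ∏ p ∈ (U ×ˢ U).filter (fun p => G.Adj p.1 p.2),
      ‖x p.1 - x p.2‖ ^ (-(lam * ν p.1 p.2)) =
      ∏ p ∈ U ×ˢ U, ‖x p.1 - x p.2‖ ^ (-(lam * ν p.1 p.2)) := by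
    apply Finset.prod_filter_of_ne
    intro p _ hne
    by_contra hadj
    apply hne
    rw [hnonedge _ _ hadj]
    simp
  rw [← h1, ← Finset.prod_fiberwise_of_maps_to (g := fun p : V × V => s(p.1, p.2))
    (t := G.edgeFinset.filter (fun ed => v ∉ ed))]
  · refine Finset.prod_congr rfl fun ed hed => ?_
    induction ed using Sym2.ind with
    | _ u w =>
      simp only [Finset.mem_filter, SimpleGraph.mem_edgeFinset, SimpleGraph.mem_edgeSet,
        Sym2.mem_iff, not_or] at hed
      obtain ⟨hadj, hvu, hvw⟩ := hed
      have huw : u ≠ w := hadj.ne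
      have hfib : ((U ×ˢ U).filter (fun p => G.Adj p.1 p.2)).filter
          (fun p : V × V => s(p.1, p.2) = s(u, w)) = {(u, w), (w, u)} := by
        ext ⟨c, d⟩
        simp only [Finset.mem_filter, Finset.mem_product, hU, Finset.mem_erase, Finset.mem_univ,
          and_true, Finset.mem_insert, Finset.mem_singleton, Prod.mk.injEq, Sym2.eq_iff]
        constructor
        · rintro ⟨-, h⟩; exact h
        · rintro (⟨rfl, rfl⟩ | ⟨rfl, rfl⟩)
          · exact ⟨⟨⟨Ne.symm hvu, Ne.symm hvw⟩, hadj⟩, Or.inl ⟨rfl, rfl⟩⟩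
          · exact ⟨⟨⟨Ne.symm hvw, Ne.symm hvu⟩, hadj.symm⟩, Or.inr ⟨rfl, rfl⟩⟩
      rw [hfib, Finset.prod_pair (by simp [huw])]
      simp only [Sym2.lift_mk]
      rw [norm_sub_rev (x w) (x u), ← hsym u w]
      have := hedge u w hadj
      rw [← Real.rpow_add' (norm_nonneg _)]
      · congr 1
        ring
      · have := mul_pos hlam this
        linarith
  · rintro ⟨c, d⟩ h
    simp only [Finset.mem_filter, Finset.mem_product, hU, Finset.mem_erase, Finset.mem_univ,
          and_true] at h
    simp only [Finset.mem_filter, SimpleGraph.mem_edgeFinset, SimpleGraph.mem_edgeSet,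
        Sym2.mem_iff, not_or]
    exact ⟨h.2, Ne.symm h.1.1, Ne.symm h.1.2⟩

/-- Extension by zero. -/
noncomputable def ext0 (D : ℕ) (v a b : V) (y : {u : V // u ≠ v ∧ u ≠ a ∧ u ≠ b} → Eu D) : V → Eu D :=
  fun u => if h : u ≠ v ∧ u ≠ a ∧ u ≠ b then y ⟨u, h⟩ else 0

lemma meas_ext0 (v a b : V) : Measurable (ext0 D v a b) := by
  rw [measurable_pi_iff]
  intro u
  unfold ext0
  by_cases h : u ≠ v ∧ u ≠ a ∧ u ≠ b
  · simp only [dif_pos h]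
    exact measurable_pi_apply _
  · simp only [dif_neg h]
    exact measurable_const

lemma PS_map (v a b : V) : PS D ({v, a, b}ᶜ : Finset V) = Measure.map (ext0 D v a b) volume := by
  have hmem : ∀ u, u ∈ ({v, a, b}ᶜ : Finset V) ↔ (u ≠ v ∧ u ≠ a ∧ u ≠ b) := by
    intro u; simp
  unfold PS
  apply Measure.pi_eq
  intro s hs
  rw [Measure.map_apply (meas_ext0 v a b) (MeasurableSet.univ_pi hs),
    ← Finset.prod_mul_prod_compl ({v, a, b}ᶜ : Finset V)]
  by_cases h : ∀ u, ¬ (u ≠ v ∧ u ≠ a ∧ u ≠ b) → (0 : Eu D) ∈ s u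
  · have e1 : (ext0 D v a b) ⁻¹' (Set.univ.pi s) =
        Set.univ.pi (fun u : {u : V // u ≠ v ∧ u ≠ a ∧ u ≠ b} => s u) := by
      ext y
      simp only [Set.mem_preimage, Set.mem_pi, Set.mem_univ, true_implies]
      constructor
      · intro hy u
        have := hy u
        unfold ext0 at this
        rwa [dif_pos u.2] at this
      · intro hy u
        unfold ext0
        split_ifs with hu
        · exact hy ⟨u, hu⟩
        · exact h u hu
    rw [e1, volume_pi_pi]
    have e2 : ∏ u ∈ ({v, a, b}ᶜ : Finset V)ᶜ, muS D ({v, a, b}ᶜ : Finset V) u (s u) = 1 := by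
      refine Finset.prod_eq_one fun u hu => ?_
      rw [Finset.mem_compl] at hu
      unfold muS
      rw [if_neg hu, Measure.dirac_apply' _ (hs u),
        Set.indicator_of_mem (h u (fun h' => hu ((hmem u).mpr h')))]
      rfl
    rw [e2, mul_one, Finset.prod_subtype _ hmem]
    refine Finset.prod_congr rfl fun u _ => ?_
    unfold muS
    rw [if_pos ((hmem u).mpr u.2)]
  · push Not at h
    obtain ⟨u, hu, hu0⟩ := h
    have hu' : ¬ (u ≠ v ∧ u ≠ a ∧ u ≠ b) := fun hh => hh.2.2 (hu hh.1 hh.2.1)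
    have e1 : (ext0 D v a b) ⁻¹' (Set.univ.pi s) = ∅ := by
      ext y
      simp only [Set.mem_preimage, Set.mem_pi, Set.mem_univ, true_implies, Set.mem_empty_iff_false,
        iff_false]
      intro hy
      have := hy u
      unfold ext0 at this
      rw [dif_neg hu'] at this
      exact hu0 this
    have huS : u ∉ ({v, a, b}ᶜ : Finset V) := fun hh => hu' ((hmem u).mp hh)
    rw [e1, measure_empty, Finset.prod_eq_zero (i := u) (s := ({v, a, b}ᶜ : Finset V)ᶜ)
      (Finset.mem_compl.mpr huS), mul_zero]
    unfold muS
    rw [if_neg huS, Measure.dirac_apply' _ (hs u), Set.indicator_of_notMem hu0]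

lemma Pg_ext (s : V → V → ℝ) (v a b : V) (e : Eu D) :
    ∫⁻ y, ENNReal.ofReal (H s v (Function.update (ext0 D v a b y) b e)) = Pg s v a b e := by
  unfold Pg
  rw [PS_map, lintegral_map (meas_Hupd s v b e) (meas_ext0 v a b)]

end Period

end PartG

open Period

/-- Every decompletion of a completed primitive graph, with any two of the
remaining vertices placed at `0` and at a unit vector, has the same finite
Feynman period. -/
theorem decompletions_of_primitive_have_same_period
    (D : ℕ) (hD : 3 ≤ D) (V : Type) [Fintype V] [DecidableEq V]
    (hV : 4 ≤ Fintype.card V)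
    (G : SimpleGraph V) [DecidableRel G.Adj]
    (ν : V → V → ℝ) (hsym : ∀ u w, ν u w = ν w u)
    (hedge : ∀ u w, G.Adj u w → 0 < ν u w)
    (hnonedge : ∀ u w, ¬G.Adj u w → ν u w = 0)
    (hdeg : ∀ u : V, ∑ w : V, ν u w = (D : ℝ) / (((D : ℝ) - 2) / 2))
    (hprim : ∀ S : Finset V, 2 ≤ S.card → 2 ≤ Sᶜ.card →
      (D : ℝ) / (((D : ℝ) - 2) / 2) < ∑ u ∈ S, ∑ w ∈ Sᶜ, ν u w) :
    let lam : ℝ := ((D : ℝ) - 2) / 2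
    let F : ∀ (v a b : V), EuclideanSpace ℝ (Fin D) →
        ({u : V // u ≠ v ∧ u ≠ a ∧ u ≠ b} → EuclideanSpace ℝ (Fin D)) → ℝ :=
      fun v a b e y =>
        ∏ ed ∈ G.edgeFinset.filter (fun ed => v ∉ ed),
          Sym2.lift ⟨fun u w =>
            ‖(if u = a then 0 else if u = b then e
                else if h : u ≠ v ∧ u ≠ a ∧ u ≠ b then y ⟨u, h⟩ else 0) -
              (if w = a then 0 else if w = b then e
                else if h : w ≠ v ∧ w ≠ a ∧ w ≠ b then y ⟨w, h⟩ else 0)‖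
              ^ (-(lam * (ν u w + ν w u))),
            fun u w => by dsimp only; rw [norm_sub_rev, add_comm (ν u w)]⟩ ed
    (∀ (v a b : V), v ≠ a → v ≠ b → a ≠ b →
      ∀ e : EuclideanSpace ℝ (Fin D), ‖e‖ = 1 → Integrable (F v a b e)) ∧
    ∃ c : ℝ, ∀ (v a b : V), v ≠ a → v ≠ b → a ≠ b →
      ∀ e : EuclideanSpace ℝ (Fin D), ‖e‖ = 1 →
        Real.pi ^ (-((D : ℝ) * ((Fintype.card V - 3 : ℕ) : ℝ)) / 2) *
          (∫ y : {u : V // u ≠ v ∧ u ≠ a ∧ u ≠ b} → EuclideanSpace ℝ (Fin D),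
            F v a b e y) = c := by
  intro lam F
  have hlam : 0 < lam := by
    have : (3 : ℝ) ≤ D := by exact_mod_cast hD
    simp only [lam]
    linarith
  set s : V → V → ℝ := fun u w => lam * ν u w with hsdef
  have hs : Good D s := by
    refine ⟨fun u w => by simp only [hsdef]; rw [hsym], fun u => ?_, fun u w => ?_, fun u => ?_⟩
    · simp only [hsdef]
      rw [hnonedge u u (G.irrefl), mul_zero]
    · refine mul_nonneg hlam.le ?_
      by_cases h : G.Adj u w
      · exact (hedge u w h).le
      · rw [hnonedge u w h]
    · simp only [hsdef]
      rw [← Finset.mul_sum, hdeg u]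
      exact mul_div_cancel₀ _ hlam.ne'
  have hp : ∀ S : Finset V, 2 ≤ S.card → 2 ≤ Sᶜ.card → (D : ℝ) < ∑ u ∈ S, ∑ w ∈ Sᶜ, s u w := by
    intro S h1 h2
    have := hprim S h1 h2
    rw [div_lt_iff₀ hlam] at this
    simp only [hsdef, ← Finset.mul_sum]
    rw [mul_comm]
    exact this
  obtain ⟨c, hc, hPg⟩ := Pg_const hs hD hV hp
  have hF : ∀ v a b : V, a ≠ b → ∀ e : Eu D,
      F v a b e = fun y => H s v (Function.update (ext0 D v a b y) b e) := by
    intro v a b hab e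
    funext y
    have hx : (fun u => (if u = a then 0 else if u = b then e
                else if h : u ≠ v ∧ u ≠ a ∧ u ≠ b then y ⟨u, h⟩ else 0 : Eu D)) =
        Function.update (ext0 D v a b y) b e := by
      funext u
      by_cases hub : u = b
      · subst hub
        simp [hab.symm]
      · rw [Function.update_of_ne hub]
        by_cases hua : u = a
        · subst hua
          simp [ext0]
        · simp only [hua, hub, if_false]
          unfold ext0
          simp [hua, hub]
    rw [← hx]
    exact edge_prod G ν hsym hedge hnonedge lam hlam v (fun u => (if u = a then 0 else if u = b then e
                else if h : u ≠ v ∧ u ≠ a ∧ u ≠ b then y ⟨u, h⟩ else 0 : Eu D)) _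
  have hm : ∀ v a b : V, ∀ e : Eu D,
      Measurable (fun y => H s v (Function.update (ext0 D v a b y) b e)) := fun v a b e =>
    (meas_H s v).comp ((meas_upd b e).comp (meas_ext0 v a b))
  refine ⟨?_, Real.pi ^ (-((D : ℝ) * ((Fintype.card V - 3 : ℕ) : ℝ)) / 2) * c.toReal, ?_⟩
  · intro v a b hva hvb hab e he
    rw [hF v a b hab e]
    refine ⟨(hm v a b e).aestronglyMeasurable, ?_⟩
    rw [hasFiniteIntegral_iff_ofReal (Filter.Eventually.of_forall fun y => H_nonneg _ _ _),
      Pg_ext, hPg v a b hva hvb hab e he]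
    exact hc.lt_top
  · intro v a b hva hvb hab e he
    rw [hF v a b hab e, integral_eq_lintegral_of_nonneg_ae
      (Filter.Eventually.of_forall fun y => H_nonneg _ _ _) (hm v a b e).aestronglyMeasurable,
      Pg_ext, hPg v a b hva hvb hab e he]
end

section
/- Let D ≥ 3 be an integer and λ = (D−2)/2. Let Ḡ be a finite simple graph with vertex set V̄, |V̄| ≥ 4, and edge weights ν : E(Ḡ) → (0, ∞) such that every vertex v satisfies Σ_{e ∋ v} ν_e = D/λ. Assume Ḡ is not primitive: there exists a partition V̄ = V₁ ⊔ V₂ with |V₁| ≥ 2 and |V₂| ≥ 2 such that Σ_{e ∈ E(V₁, V₂)} ν_e ≤ D/λ. Then for every choice of pairwise distinct vertices v, a, b ∈ V̄ and every unit vector e ∈ ℝ^D, the function (x_u)_{u ∈ V̄∖{v,a,b}} ↦ ∏_{{u,w} ∈ E(Ḡ), v ∉ {u,w}} ‖x_u − x_w‖^{−2λν_{uw}} (with x_a = 0, x_b = e) is not Lebesgue integrable on (ℝ^D)^{V̄∖{v,a,b}}. -/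
open MeasureTheory

section Helpers
open Filter Topology

/-- The box in configuration space: coordinates in `T` scale with `r` around `q`. -/
def boxSet {D : ℕ} {ι : Type} [DecidableEq ι] (T : Finset ι)
    (e q : EuclideanSpace ℝ (Fin D)) (r : ℝ) : Set (ι → EuclideanSpace ℝ (Fin D)) :=
  Set.univ.pi fun u => if u ∈ T then Metric.ball (q + (2 * r) • e) r else Metric.ball 0 1

lemma boxSet_mem_T {D : ℕ} {ι : Type} [DecidableEq ι] {T : Finset ι}
    {e q : EuclideanSpace ℝ (Fin D)} (he : ‖e‖ = 1) {r : ℝ} (hr : 0 < r)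
    {z : ι → EuclideanSpace ℝ (Fin D)}
    (hz : z ∈ boxSet T e q r) {u : ι} (hu : u ∈ T) :
    r < ‖z u - q‖ ∧ ‖z u - q‖ < 3 * r := by
  have h := hz u (Set.mem_univ u)
  simp only [hu, if_true, Metric.mem_ball, dist_eq_norm] at h
  have h2 : ‖(2 * r) • e‖ = 2 * r := by
    rw [norm_smul, he, Real.norm_eq_abs, abs_of_pos (by linarith)]; ring
  have h3 : z u - (q + (2 * r) • e) = (z u - q) - (2 * r) • e := by abel
  rw [h3] at h
  have h4 := norm_sub_norm_le (z u - q) ((2 * r) • e)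
  have h5 := norm_sub_norm_le ((2 * r) • e) (z u - q)
  rw [norm_sub_rev ((2 * r) • e)] at h5
  constructor <;> linarith

lemma boxSet_mem_nT {D : ℕ} {ι : Type} [DecidableEq ι] {T : Finset ι}
    {e q : EuclideanSpace ℝ (Fin D)} {r : ℝ}
    {z : ι → EuclideanSpace ℝ (Fin D)}
    (hz : z ∈ boxSet T e q r) {u : ι} (hu : u ∉ T) :
    ‖z u‖ < 1 := by
  have h := hz u (Set.mem_univ u)
  simpa [hu] using h

lemma boxSet_exclude {D : ℕ} {ι : Type} [DecidableEq ι] {T : Finset ι} (hT : T.Nonempty)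
    {e q : EuclideanSpace ℝ (Fin D)} (he : ‖e‖ = 1) {r : ℕ → ℝ} (hr : ∀ n, 0 < r n)
    (hlim : Tendsto r atTop (𝓝 0) ∨ Tendsto r atTop atTop)
    (z : ι → EuclideanSpace ℝ (Fin D)) : ∀ᶠ n in atTop, z ∉ boxSet T e q (r n) := by
  obtain ⟨u, hu⟩ := hT
  rcases hlim with h | h
  · rcases (norm_nonneg (z u - q)).eq_or_lt with h0 | h0
    · refine Eventually.of_forall fun n hz => ?_
      have := (boxSet_mem_T he (hr n) hz hu).1
      have := hr n
      linarith
    · have : ∀ᶠ n in atTop, r n < ‖z u - q‖ / 3 := h.eventually_lt_const (by positivity)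
      filter_upwards [this] with n hn hz
      have := (boxSet_mem_T he (hr n) hz hu).2
      linarith
  · filter_upwards [h.eventually_gt_atTop ‖z u - q‖] with n hn hz
    have := (boxSet_mem_T he (hr n) hz hu).1
    linarith

lemma boxSet_volume {D : ℕ} (hD : 0 < D) {ι : Type} [Fintype ι] [DecidableEq ι] (T : Finset ι)
    (e q : EuclideanSpace ℝ (Fin D)) {r : ℝ} (hr : 0 < r) :
    volume (boxSet T e q r) = ENNReal.ofReal (r ^ (D * T.card)) *
      volume (Metric.ball (0 : EuclideanSpace ℝ (Fin D)) 1) ^ Fintype.card ι := by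
  have : Nonempty (Fin D) := ⟨⟨0, hD⟩⟩
  have : ∀ u : ι, volume (if u ∈ T then Metric.ball (q + (2 * r) • e) r else Metric.ball 0 1) =
      (if u ∈ T then ENNReal.ofReal (r ^ D) else 1) *
        volume (Metric.ball (0 : EuclideanSpace ℝ (Fin D)) 1) := by
    intro u
    split_ifs
    · rw [Measure.addHaar_ball _ _ hr.le]; simp
    · simp
  rw [boxSet, volume_pi_pi]
  simp_rw [this]
  rw [Finset.prod_mul_distrib, Finset.prod_const, Finset.card_univ, Finset.prod_ite_mem,
    Finset.univ_inter, Finset.prod_const, pow_mul,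
    ENNReal.ofReal_pow (p := r ^ D) (by positivity)]

lemma core {D : ℕ} (hD : 0 < D) {ι : Type} [Fintype ι] [DecidableEq ι] {T : Finset ι}
    (hT : T.Nonempty) {e q : EuclideanSpace ℝ (Fin D)} (he : ‖e‖ = 1) {r : ℕ → ℝ}
    (hr : ∀ n, 0 < r n) (hlim : Tendsto r atTop (𝓝 0) ∨ Tendsto r atTop atTop)
    (L : (ι → EuclideanSpace ℝ (Fin D)) ≃ₗ[ℝ] (ι → EuclideanSpace ℝ (Fin D)))
    {F : (ι → EuclideanSpace ℝ (Fin D)) → ℝ} (hF : Integrable F) {c : ℝ} (hc : 0 < c)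
    (h : ∀ n, ∀ᵐ y, L.symm y ∈ boxSet T e q (r n) → c * (r n ^ (D * T.card))⁻¹ ≤ F y) :
    False := by
  set A : ℕ → Set (ι → EuclideanSpace ℝ (Fin D)) := fun n => L '' boxSet T e q (r n) with hA
  have hmem : ∀ n y, y ∈ A n ↔ L.symm y ∈ boxSet T e q (r n) := by
    intro n y
    constructor
    · rintro ⟨z, hz, rfl⟩; simpa using hz
    · intro hy; exact ⟨_, hy, by simp⟩
  have hBm : ∀ n, MeasurableSet (boxSet T e q (r n)) := by
    intro n
    refine MeasurableSet.univ_pi fun u => ?_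
    split_ifs <;> exact measurableSet_ball
  have hAm : ∀ n, MeasurableSet (A n) := by
    intro n
    have hc : Measurable L.symm := by
      have : Continuous L.symm.toLinearMap := LinearMap.continuous_of_finiteDimensional _
      exact this.measurable
    have : A n = L.symm ⁻¹' boxSet T e q (r n) := by ext y; exact hmem n y
    rw [this]; exact hc (hBm n)
  have hdet : 0 < |LinearMap.det L.toLinearMap| := abs_pos.mpr (LinearEquiv.isUnit_det' L).ne_zero
  set ω := volume (Metric.ball (0 : EuclideanSpace ℝ (Fin D)) 1) with hω
  have hω0 : 0 < ω := Metric.measure_ball_pos _ _ one_pos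
  have hωt : ω < ⊤ := measure_ball_lt_top
  have hAv : ∀ n, volume (A n) = ENNReal.ofReal |LinearMap.det L.toLinearMap| *
      (ENNReal.ofReal (r n ^ (D * T.card)) * ω ^ Fintype.card ι) := by
    intro n
    have := Measure.addHaar_image_linearMap volume L.toLinearMap (boxSet T e q (r n))
    rw [boxSet_volume hD T e q (hr n)] at this
    exact this
  have hAr : ∀ n, volume.real (A n) = |LinearMap.det L.toLinearMap| *
      (r n ^ (D * T.card) * ω.toReal ^ Fintype.card ι) := by
    intro n
    have := hr n
    rw [Measure.real, hAv, ENNReal.toReal_mul, ENNReal.toReal_mul, ENNReal.toReal_pow,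
      ENNReal.toReal_ofReal hdet.le, ENNReal.toReal_ofReal (by positivity)]
  have hωr : 0 < ω.toReal := ENNReal.toReal_pos hω0.ne' hωt.ne
  have hlow : ∀ n, c * |LinearMap.det L.toLinearMap| * ω.toReal ^ Fintype.card ι
      ≤ ∫ y, (A n).indicator F y := by
    intro n
    rw [integral_indicator (hAm n)]
    have h1 : ∫ y in A n, c * (r n ^ (D * T.card))⁻¹ ≤ ∫ y in A n, F y := by
      refine setIntegral_mono_on_ae ?_ hF.integrableOn (hAm n) ?_
      · refine integrableOn_const ?_
        rw [hAv]
        exact ENNReal.mul_ne_top ENNReal.ofReal_ne_top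
          (ENNReal.mul_ne_top ENNReal.ofReal_ne_top (ENNReal.pow_ne_top hωt.ne))
      · filter_upwards [h n] with y hy hyA
        exact hy ((hmem n y).1 hyA)
    rw [setIntegral_const, hAr, smul_eq_mul] at h1
    refine le_trans (le_of_eq ?_) h1
    have := hr n
    field_simp
  have hlim0 : Tendsto (fun n => ∫ y, (A n).indicator F y) atTop (𝓝 (∫ y, (0 : ℝ)
      ∂(volume : Measure (ι → EuclideanSpace ℝ (Fin D))))) := by
    refine tendsto_integral_of_dominated_convergence (fun y => ‖F y‖) ?_ hF.norm ?_ ?_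
    · intro n; exact hF.aestronglyMeasurable.indicator (hAm n)
    · intro n; exact Eventually.of_forall fun y => norm_indicator_le_norm_self _ _
    · refine Eventually.of_forall fun y => ?_
      refine tendsto_const_nhds.congr' ?_
      filter_upwards [boxSet_exclude hT (q := q) he hr hlim (L.symm y)] with n hn
      rw [Set.indicator_of_notMem]
      rwa [hmem]
  rw [integral_zero] at hlim0
  have := ge_of_tendsto' hlim0 hlow
  have : 0 < c * |LinearMap.det L.toLinearMap| * ω.toReal ^ Fintype.card ι := by positivity
  linarith

/-- Position of the vertex `u`. -/
def pos {D : ℕ} {V : Type} [DecidableEq V] (v a b : V) (e : EuclideanSpace ℝ (Fin D))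
    (y : {u : V // u ≠ v ∧ u ≠ a ∧ u ≠ b} → EuclideanSpace ℝ (Fin D)) (u : V) :
    EuclideanSpace ℝ (Fin D) :=
  if u = a then 0 else if u = b then e
    else if h : u ≠ v ∧ u ≠ a ∧ u ≠ b then y ⟨u, h⟩ else 0

lemma ae_ne_aux {D : ℕ} (hD : 0 < D) {ι : Type} [Fintype ι] [DecidableEq ι] {i j : ι} (hij : i ≠ j) :
    ∀ᵐ y : ι → EuclideanSpace ℝ (Fin D), y i ≠ y j := by
  have : Nonempty (Fin D) := ⟨⟨0, hD⟩⟩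
  have := Measure.addHaar_submodule (volume : Measure (ι → EuclideanSpace ℝ (Fin D)))
    (LinearMap.ker ((LinearMap.proj i : (ι → EuclideanSpace ℝ (Fin D)) →ₗ[ℝ] _) - LinearMap.proj j)) (by
      intro h
      obtain ⟨x, hx⟩ := exists_ne (0 : EuclideanSpace ℝ (Fin D))
      have h2 : (Pi.single i x : ι → EuclideanSpace ℝ (Fin D)) ∈ LinearMap.ker
        ((LinearMap.proj i : (ι → EuclideanSpace ℝ (Fin D)) →ₗ[ℝ] _) - LinearMap.proj j) := by
        rw [h]; trivial
      simp [hij.symm] at h2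
      exact hx h2)
  rw [ae_iff]
  convert this using 2
  ext y
  simp [sub_eq_zero]

lemma ae_pos_ne {D : ℕ} (hD : 0 < D) {V : Type} [Fintype V] [DecidableEq V] {v a b : V}
    (hab : a ≠ b) {e : EuclideanSpace ℝ (Fin D)} (he : ‖e‖ = 1) :
    ∀ᵐ y : {u : V // u ≠ v ∧ u ≠ a ∧ u ≠ b} → EuclideanSpace ℝ (Fin D),
      ∀ u w, u ≠ v → w ≠ v → u ≠ w → pos v a b e y u ≠ pos v a b e y w := by
  have : Nonempty (Fin D) := ⟨⟨0, hD⟩⟩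
  have he0 : e ≠ 0 := by rintro rfl; simp at he
  have key : ∀ (i : {u : V // u ≠ v ∧ u ≠ a ∧ u ≠ b}) (x : EuclideanSpace ℝ (Fin D)),
      ∀ᵐ y : {u : V // u ≠ v ∧ u ≠ a ∧ u ≠ b} → EuclideanSpace ℝ (Fin D), y i ≠ x :=
    fun i x => Measure.ae_eval_ne
      (α := fun _ => EuclideanSpace ℝ (Fin D)) (fun _ => volume) i x
  have h1 := ae_all_iff.2 fun i => key i 0
  have h2 := ae_all_iff.2 fun i => key i e
  have h3 : ∀ᵐ y : {u : V // u ≠ v ∧ u ≠ a ∧ u ≠ b} → EuclideanSpace ℝ (Fin D),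
      ∀ i j, i ≠ j → y i ≠ y j := by
    rw [ae_all_iff]; intro i
    rw [ae_all_iff]; intro j
    by_cases hij : i = j
    · simp [hij]
    · filter_upwards [ae_ne_aux hD hij] with y hy _ using hy
  filter_upwards [h1, h2, h3] with y h1 h2 h3 u w hu hw huw
  have hpa : pos v a b e y a = 0 := by simp [pos]
  have hpb : pos v a b e y b = e := by simp [pos, hab.symm]
  have hpf : ∀ u (h : u ≠ v ∧ u ≠ a ∧ u ≠ b), pos v a b e y u = y ⟨u, h⟩ :=
    fun u h => by simp [pos, h]
  have hfree : ∀ u w, w ≠ v → u ≠ w → (u ≠ v ∧ u ≠ a ∧ u ≠ b) →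
      pos v a b e y u ≠ pos v a b e y w := by
    intro u w hw huw h
    rw [hpf u h]
    by_cases hwa : w = a
    · rw [hwa, hpa]; exact h1 _
    by_cases hwb : w = b
    · rw [hwb, hpb]; exact h2 _
    rw [hpf w ⟨hw, hwa, hwb⟩]
    exact h3 _ _ fun h' => huw (congrArg Subtype.val h')
  by_cases hu' : u ≠ a ∧ u ≠ b
  · exact hfree u w hw huw ⟨hu, hu'⟩
  by_cases hw' : w ≠ a ∧ w ≠ b
  · exact (hfree w u hu huw.symm ⟨hw, hw'⟩).symm
  have hu2 : u = a ∨ u = b := by tauto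
  have hw2 : w = a ∨ w = b := by tauto
  rcases hu2 with rfl | rfl <;> rcases hw2 with rfl | rfl
  · exact absurd rfl huw
  · rw [hpa, hpb]; exact he0.symm
  · rw [hpa, hpb]; exact he0
  · exact absurd rfl huw

/-- Sum over edges equals half the sum over ordered pairs. -/
lemma sum_edges {V : Type} [Fintype V] [DecidableEq V] (G : SimpleGraph V) [DecidableRel G.Adj]
    (f : Sym2 V → ℝ) :
    2 * ∑ ed ∈ G.edgeFinset, f ed = ∑ u, ∑ w, if G.Adj u w then f s(u, w) else 0 := by
  rw [← Fintype.sum_prod_type' (f := fun u w => if G.Adj u w then f s(u, w) else 0),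
    ← Finset.sum_filter]
  rw [← Finset.sum_fiberwise_of_maps_to (t := G.edgeFinset) (g := fun p : V × V => s(p.1, p.2))
    (by intro p hp; simpa using hp), Finset.mul_sum]
  refine Finset.sum_congr rfl fun ed hed => ?_
  induction ed using Sym2.ind with
  | _ x y =>
    have hxy : G.Adj x y := by simpa using hed
    have : (Finset.univ.filter fun p : V × V => G.Adj p.1 p.2).filter
        (fun p => s(p.1, p.2) = s(x, y)) = {(x, y), (y, x)} := by
      ext ⟨p, q⟩
      simp only [Finset.mem_filter, Finset.mem_univ, true_and, Finset.mem_insert,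
        Finset.mem_singleton, Prod.mk.injEq, Sym2.eq_iff]
      constructor
      · rintro ⟨_, h⟩; exact h
      · rintro (⟨rfl, rfl⟩ | ⟨rfl, rfl⟩)
        · simp [hxy]
        · simp [hxy.symm]
    rw [this, Finset.sum_pair (by simp [hxy.ne])]
    rw [Sym2.eq_swap (a := y)]; ring

lemma main_div {D : ℕ} (hD : 3 ≤ D) {V : Type} [Fintype V] [DecidableEq V]
    (G : SimpleGraph V) [DecidableRel G.Adj]
    {ν : V → V → ℝ} (hsym : ∀ u w, ν u w = ν w u)
    (hedge : ∀ u w, G.Adj u w → 0 < ν u w)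
    (hnonedge : ∀ u w, ¬G.Adj u w → ν u w = 0)
    {v a b : V} (hab : a ≠ b) {e q : EuclideanSpace ℝ (Fin D)} (he : ‖e‖ = 1)
    {lam : ℝ} (hlam : 0 < lam)
    {T : Finset {u : V // u ≠ v ∧ u ≠ a ∧ u ≠ b}} (hT : T.Nonempty)
    (L : ({u : V // u ≠ v ∧ u ≠ a ∧ u ≠ b} → EuclideanSpace ℝ (Fin D)) ≃ₗ[ℝ]
      ({u : V // u ≠ v ∧ u ≠ a ∧ u ≠ b} → EuclideanSpace ℝ (Fin D)))
    {r : ℕ → ℝ} (hr : ∀ n, 0 < r n)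
    (hlim : Tendsto r atTop (𝓝 0) ∨ Tendsto r atTop atTop)
    (P : Sym2 V → Prop) [DecidablePred P]
    (hdist : ∀ n, ∀ z ∈ boxSet T e q (r n), ∀ u w, u ≠ v → w ≠ v →
      ‖pos v a b e (L z) u - pos v a b e (L z) w‖ ≤ 8 * (if P s(u, w) then r n else 1))
    (hexp : ∀ n, (r n ^ (D * T.card))⁻¹ ≤
      r n ^ (-(lam * ∑ u, ∑ w, if u ≠ v ∧ w ≠ v ∧ P s(u, w) then ν u w else 0))) :
    ¬ Integrable (fun y : {u : V // u ≠ v ∧ u ≠ a ∧ u ≠ b} → EuclideanSpace ℝ (Fin D) =>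
      ∏ ed ∈ G.edgeFinset.filter (fun ed => v ∉ ed),
          Sym2.lift ⟨fun u w =>
            ‖pos v a b e y u - pos v a b e y w‖ ^ (-(lam * (ν u w + ν w u))),
            fun u w => by dsimp only; rw [norm_sub_rev, add_comm (ν u w)]⟩ ed) := by
  intro hint
  set W : Sym2 V → ℝ := Sym2.lift ⟨fun u w => lam * (ν u w + ν w u),
    fun u w => by dsimp only; rw [add_comm (ν u w)]⟩ with hW
  set Ev := G.edgeFinset.filter (fun ed => v ∉ ed) with hEv
  have hsum : ∑ ed ∈ Ev, (if P ed then W ed else 0) =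
      lam * ∑ u, ∑ w, if u ≠ v ∧ w ≠ v ∧ P s(u, w) then ν u w else 0 := by
    rw [hEv, Finset.sum_filter]
    have h2 := sum_edges G (fun ed => if v ∉ ed then (if P ed then W ed else 0) else 0)
    have h3 : ∀ u w, (if G.Adj u w then
        (if v ∉ s(u, w) then (if P s(u, w) then W s(u, w) else 0) else 0) else 0) =
        2 * lam * (if u ≠ v ∧ w ≠ v ∧ P s(u, w) then ν u w else 0) := by
      intro u w
      by_cases hA : G.Adj u w
      · by_cases hu : u = v
        · simp [hu]
        by_cases hw : w = v
        · simp [hw]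
        have : v ∉ s(u, w) := by simp [Ne.symm hu, Ne.symm hw]
        by_cases hP : P s(u, w)
        · simp only [hA, this, hP, hu, hw, W, if_true, Sym2.lift_mk, hsym w u, not_false_eq_true,
            ne_eq, and_self]
          ring
        · simp [hP]
      · simp [hA, hnonedge u w hA]
    simp_rw [h3, ← Finset.mul_sum] at h2
    linarith
  refine core (by omega) hT (q := q) he hr hlim L hint
    (c := (8 : ℝ) ^ (-(∑ ed ∈ Ev, W ed))) (by positivity) ?_
  intro n
  filter_upwards [ae_pos_ne (by omega) (v := v) hab he] with y hy hbox
  have hrn := hr n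
  calc _ ≤ (8 : ℝ) ^ (-(∑ ed ∈ Ev, W ed)) *
        r n ^ (-(∑ ed ∈ Ev, (if P ed then W ed else 0))) := by
        rw [hsum]
        exact mul_le_mul_of_nonneg_left (hexp n) (by positivity)
    _ = ∏ ed ∈ Ev, (8 * (if P ed then r n else 1)) ^ (-W ed) := by
        rw [← Finset.sum_neg_distrib, ← Finset.sum_neg_distrib,
          Real.rpow_sum_of_pos (by norm_num), Real.rpow_sum_of_pos hrn, ← Finset.prod_mul_distrib]
        refine Finset.prod_congr rfl fun ed _ => ?_
        split_ifs
        · rw [Real.mul_rpow (by norm_num) hrn.le]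
        · simp
    _ ≤ _ := by
        refine Finset.prod_le_prod (fun ed _ => ?_) (fun ed hed => ?_)
        · split_ifs <;> positivity
        · induction ed using Sym2.ind with
          | _ u w =>
            simp only [hEv, Finset.mem_filter, SimpleGraph.mem_edgeFinset,
              SimpleGraph.mem_edgeSet, Sym2.mem_iff, not_or] at hed
            obtain ⟨hA, hu, hw⟩ := hed
            have h1 := hdist n _ hbox u w (Ne.symm hu) (Ne.symm hw)
            rw [LinearEquiv.apply_symm_apply] at h1
            have h2 := hy u w (Ne.symm hu) (Ne.symm hw) hA.ne
            simp only [W, Sym2.lift_mk]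
            refine Real.rpow_le_rpow_of_nonpos (norm_pos_iff.2 (sub_ne_zero.2 h2)) h1 ?_
            have := hedge u w hA
            have := hsym u w
            have : 0 ≤ lam * (ν u w + ν w u) := mul_nonneg hlam.le (by linarith)
            linarith

/-- Shear: add the coordinate `k` to all coordinates in `T`. -/
def shear {D : ℕ} {ι : Type} [DecidableEq ι] (T : Finset ι) (k : ι) (hk : k ∉ T) :
    (ι → EuclideanSpace ℝ (Fin D)) ≃ₗ[ℝ] (ι → EuclideanSpace ℝ (Fin D)) where
  toFun z u := if u ∈ T then z u + z k else z u
  invFun z u := if u ∈ T then z u - z k else z u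
  map_add' x y := by
    ext1 u; by_cases h : u ∈ T
    · simp only [h, if_true, Pi.add_apply]; abel
    · simp [h]
  map_smul' c x := by
    ext1 u; by_cases h : u ∈ T
    · simp [h]
    · simp [h]
  left_inv x := by
    ext1 u; by_cases h : u ∈ T
    · simp [h, hk]
    · simp [h]
  right_inv x := by
    ext1 u; by_cases h : u ∈ T
    · simp [h, hk]
    · simp [h]

lemma shear_apply {D : ℕ} {ι : Type} [DecidableEq ι] (T : Finset ι) (k : ι) (hk : k ∉ T)
    (z : ι → EuclideanSpace ℝ (Fin D)) (u : ι) :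
    shear T k hk z u = if u ∈ T then z u + z k else z u := rfl

lemma final {D : ℕ} (hD : 3 ≤ D) {V : Type} [Fintype V] [DecidableEq V]
    (G : SimpleGraph V) [DecidableRel G.Adj]
    {ν : V → V → ℝ} (hsym : ∀ u w, ν u w = ν w u)
    (hedge : ∀ u w, G.Adj u w → 0 < ν u w)
    (hnonedge : ∀ u w, ¬G.Adj u w → ν u w = 0)
    {lam : ℝ} (hlam : 0 < lam)
    (hdeg : ∀ u : V, ∑ w : V, ν u w = (D : ℝ) / lam)
    {v a b : V} (hva : v ≠ a) (hvb : v ≠ b) (hab : a ≠ b)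
    {e : EuclideanSpace ℝ (Fin D)} (he : ‖e‖ = 1)
    (S : Finset V) (hvS : v ∉ S) (hS : 2 ≤ S.card) (hSc : 2 ≤ Sᶜ.card)
    (hcut : ∑ u ∈ S, ∑ w ∈ Sᶜ, ν u w ≤ (D : ℝ) / lam) :
    ¬ Integrable (fun y : {u : V // u ≠ v ∧ u ≠ a ∧ u ≠ b} → EuclideanSpace ℝ (Fin D) =>
      ∏ ed ∈ G.edgeFinset.filter (fun ed => v ∉ ed),
          Sym2.lift ⟨fun u w =>
            ‖pos v a b e y u - pos v a b e y w‖ ^ (-(lam * (ν u w + ν w u))),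
            fun u w => by dsimp only; rw [norm_sub_rev, add_comm (ν u w)]⟩ ed) := by
  classical
  have hposa : ∀ y, pos v a b e y a = 0 := fun y => by simp [pos]
  have hposb : ∀ y, pos v a b e y b = e := fun y => by simp [pos, hab.symm]
  have hposf : ∀ y u (h : u ≠ v ∧ u ≠ a ∧ u ≠ b), pos v a b e y u = y ⟨u, h⟩ :=
    fun y u h => by simp [pos, h]
  have hlamD : lam * ((D : ℝ) / lam) = D := by field_simp
  by_cases hboth : a ∈ S ∧ b ∈ S
  · -- the complement goes to infinity
    obtain ⟨ha, hb⟩ := hboth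
    set T : Finset {u : V // u ≠ v ∧ u ≠ a ∧ u ≠ b} := (Sᶜ.erase v).subtype _ with hTdef
    have hTm : ∀ u, u ∈ T ↔ u.1 ∉ S := by
      intro u; simp [T, u.2.1]
    have hcard : T.card + 1 = Sᶜ.card := by
      rw [hTdef, Finset.card_subtype, Finset.filter_true_of_mem, Finset.card_erase_add_one]
      · simpa using hvS
      · intro x hx
        simp only [Finset.mem_erase, Finset.mem_compl] at hx
        exact ⟨hx.1, fun h => hx.2 (h ▸ ha), fun h => hx.2 (h ▸ hb)⟩
    refine main_div hD G hsym hedge hnonedge hab (q := 0) he hlam (T := T)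
      (Finset.card_pos.1 (by omega)) (LinearEquiv.refl ℝ _) (r := fun n => (2 : ℝ) ^ n)
      (fun n => by positivity) (Or.inr (tendsto_pow_atTop_atTop_of_one_lt (by norm_num)))
      (fun ed => ∃ x ∈ ed, x ∉ S) ?_ ?_
    · intro n z hz u w hu hw
      have hr1 : (1 : ℝ) ≤ 2 ^ n := one_le_pow₀ (by norm_num)
      have hr0 : (0 : ℝ) < 2 ^ n := by positivity
      have hin : ∀ u ∈ S, ‖pos v a b e z u‖ ≤ 1 := by
        intro u huS
        by_cases h1 : u = a
        · rw [h1, hposa]; simp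
        by_cases h2 : u = b
        · rw [h2, hposb, he]
        have h : u ≠ v ∧ u ≠ a ∧ u ≠ b := ⟨fun h => hvS (h ▸ huS), h1, h2⟩
        rw [hposf z u h]
        exact (boxSet_mem_nT hz (by rw [hTm]; simpa using huS)).le
      have hout : ∀ u, u ≠ v → ‖pos v a b e z u‖ ≤ 3 * 2 ^ n := by
        intro u huv
        by_cases huS : u ∈ S
        · have := hin u huS; linarith
        have h : u ≠ v ∧ u ≠ a ∧ u ≠ b := ⟨huv, fun h => huS (h ▸ ha), fun h => huS (h ▸ hb)⟩
        rw [hposf z u h]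
        have := (boxSet_mem_T he hr0 hz (u := ⟨u, h⟩) (by rw [hTm]; exact huS)).2
        rw [sub_zero] at this
        exact this.le
      have htri := norm_sub_le (pos v a b e z u) (pos v a b e z w)
      simp only [LinearEquiv.refl_apply]
      split_ifs with hP
      · have := hout u hu
        have := hout w hw
        linarith
      · simp only [Sym2.mem_iff] at hP
        push Not at hP
        have := hin u (hP u (Or.inl rfl))
        have := hin w (hP w (Or.inr rfl))
        linarith
    · intro n
      have hr1 : (1 : ℝ) ≤ 2 ^ n := one_le_pow₀ (by norm_num)
      have hr0 : (0 : ℝ) < 2 ^ n := by positivity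
      rw [← Real.rpow_natCast, ← Real.rpow_neg hr0.le]
      refine Real.rpow_le_rpow_of_exponent_le hr1 ?_
      rw [neg_le_neg_iff]
      have hvv : ν v v = 0 := hnonedge v v (G.loopless.irrefl v)
      set R := Sᶜ.erase v with hR
      have hRv : ∀ u, u ∈ R ↔ u ≠ v ∧ u ∉ S := by intro u; simp [R]
      have hsplit : ∀ f : V → ℝ, ∑ u, f u = ∑ u ∈ S, f u + ∑ u ∈ R, f u + f v := by
        intro f
        rw [← Finset.sum_add_sum_compl S f, add_assoc, hR, Finset.sum_erase_add]
        simpa using hvS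
      have hRS : ∀ f : V → ℝ, ∑ w ∈ Sᶜ, f w = ∑ w ∈ R, f w + f v := by
        intro f; rw [hR, Finset.sum_erase_add]; simpa using hvS
      have hE : (∑ u, ∑ w, if u ≠ v ∧ w ≠ v ∧ (∃ x ∈ s(u, w), x ∉ S) then ν u w else 0) =
          ∑ u ∈ S, ∑ w ∈ R, ν u w + ∑ u ∈ R, (∑ w ∈ S, ν u w + ∑ w ∈ R, ν u w) := by
        rw [hsplit]
        have e1 : ∀ u ∈ S, (∑ w, if u ≠ v ∧ w ≠ v ∧ (∃ x ∈ s(u, w), x ∉ S) then ν u w else 0) =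
            ∑ w ∈ R, ν u w := by
          intro u hu
          have huv : u ≠ v := fun h => hvS (h ▸ hu)
          rw [← Finset.sum_filter]
          refine Finset.sum_congr ?_ fun _ _ => rfl
          ext w; simp [hRv, hu, huv]
        have e2 : ∀ u ∈ R, (∑ w, if u ≠ v ∧ w ≠ v ∧ (∃ x ∈ s(u, w), x ∉ S) then ν u w else 0) =
            ∑ w ∈ S, ν u w + ∑ w ∈ R, ν u w := by
          intro u hu
          obtain ⟨huv, huS⟩ := (hRv u).1 hu
          rw [hsplit]
          have e3 : ∀ w ∈ S, (if u ≠ v ∧ w ≠ v ∧ (∃ x ∈ s(u, w), x ∉ S) then ν u w else 0) =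
              ν u w := by
            intro w hw
            have hwv : w ≠ v := fun h => hvS (h ▸ hw)
            simp [huv, huS, hwv]
          have e4 : ∀ w ∈ R, (if u ≠ v ∧ w ≠ v ∧ (∃ x ∈ s(u, w), x ∉ S) then ν u w else 0) =
              ν u w := by
            intro w hw
            simp [huv, huS, ((hRv w).1 hw).1]
          rw [Finset.sum_congr rfl e3, Finset.sum_congr rfl e4]
          simp
        rw [Finset.sum_congr rfl e1, Finset.sum_congr rfl e2]
        simp
      rw [hE]
      have hRcard : R.card = T.card := by
        have : R.card + 1 = Sᶜ.card := Finset.card_erase_add_one (by simpa using hvS)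
        omega
      have hd1 : ∑ u ∈ R, (∑ w ∈ S, ν u w + ∑ w ∈ R, ν u w) =
          T.card * ((D : ℝ) / lam) - ∑ u ∈ R, ν u v := by
        rw [← hRcard, ← nsmul_eq_mul, ← Finset.sum_const, ← Finset.sum_sub_distrib]
        refine Finset.sum_congr rfl fun u _ => ?_
        rw [← hdeg u, hsplit]; ring
      have hd2 : ∑ u ∈ S, ∑ w ∈ R, ν u w ≤ (D : ℝ) / lam - ∑ u ∈ S, ν u v := by
        simp_rw [hRS, Finset.sum_add_distrib] at hcut
        linarith
      have hd3 : ∑ u ∈ S, ν u v + ∑ u ∈ R, ν u v = (D : ℝ) / lam := by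
        have := hdeg v
        rw [hsplit, hvv, add_zero] at this
        simp_rw [hsym v] at this
        exact this
      have : ∑ u ∈ S, ∑ w ∈ R, ν u w + ∑ u ∈ R, (∑ w ∈ S, ν u w + ∑ w ∈ R, ν u w) ≤
          T.card * ((D : ℝ) / lam) := by linarith
      have := mul_le_mul_of_nonneg_left this hlam.le
      refine this.trans (le_of_eq ?_)
      push_cast
      field_simp
  · -- the vertices of `S` collapse
    have hk : ∃ k ∈ S, ∀ u ∈ S, u ≠ k → u ≠ a ∧ u ≠ b := by
      by_cases ha : a ∈ S
      · exact ⟨a, ha, fun u hu huk => ⟨huk, fun h => hboth ⟨ha, h ▸ hu⟩⟩⟩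
      by_cases hb : b ∈ S
      · exact ⟨b, hb, fun u hu huk => ⟨fun h => ha (h ▸ hu), huk⟩⟩
      obtain ⟨k, hk⟩ := Finset.card_pos.1 (show 0 < S.card by omega)
      exact ⟨k, hk, fun u hu _ => ⟨fun h => ha (h ▸ hu), fun h => hb (h ▸ hu)⟩⟩
    obtain ⟨k, hkS, hk⟩ := hk
    have hkv : k ≠ v := fun h => hvS (h ▸ hkS)
    set T : Finset {u : V // u ≠ v ∧ u ≠ a ∧ u ≠ b} := (S.erase k).subtype _ with hTdef
    have hTm : ∀ u, u ∈ T ↔ u.1 ≠ k ∧ u.1 ∈ S := by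
      intro u; simp [T]
    have hcard : T.card + 1 = S.card := by
      rw [hTdef, Finset.card_subtype, Finset.filter_true_of_mem, Finset.card_erase_add_one hkS]
      intro x hx
      simp only [Finset.mem_erase] at hx
      exact ⟨fun h => hvS (h ▸ hx.2), hk x hx.2 hx.1⟩
    have hqL : ∃ (q : EuclideanSpace ℝ (Fin D))
        (L : ({u : V // u ≠ v ∧ u ≠ a ∧ u ≠ b} → EuclideanSpace ℝ (Fin D)) ≃ₗ[ℝ]
          ({u : V // u ≠ v ∧ u ≠ a ∧ u ≠ b} → EuclideanSpace ℝ (Fin D))),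
        ∀ r, 0 < r → ∀ z ∈ boxSet T e q r, ‖pos v a b e (L z) k‖ ≤ 1 ∧
          (∀ u ∈ T, L z u - pos v a b e (L z) k = z u - q) ∧ ∀ u ∉ T, L z u = z u := by
      by_cases hka : k = a
      · refine ⟨0, LinearEquiv.refl ℝ _, fun r hr z hz => ⟨?_, fun u hu => ?_, fun u _ => rfl⟩⟩
        · rw [hka, hposa]; simp
        · rw [hka, hposa]; simp
      by_cases hkb : k = b
      · refine ⟨e, LinearEquiv.refl ℝ _, fun r hr z hz => ⟨?_, fun u hu => ?_, fun u _ => rfl⟩⟩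
        · rw [hkb, hposb, he]
        · rw [hkb, hposb]; simp
      have h : k ≠ v ∧ k ≠ a ∧ k ≠ b := ⟨hkv, hka, hkb⟩
      have hkT : (⟨k, h⟩ : {u : V // u ≠ v ∧ u ≠ a ∧ u ≠ b}) ∉ T := by simp [hTm]
      refine ⟨0, shear T ⟨k, h⟩ hkT, fun r hr z hz => ⟨?_, fun u hu => ?_, fun u hu => ?_⟩⟩
      · rw [hposf _ k h, shear_apply, if_neg hkT]
        exact (boxSet_mem_nT hz hkT).le
      · rw [hposf _ k h, shear_apply, shear_apply, if_neg hkT, if_pos hu]; simp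
      · rw [shear_apply, if_neg hu]
    obtain ⟨q, L, hL⟩ := hqL
    have hr0 : ∀ n : ℕ, (0 : ℝ) < (1 / 2) ^ n := fun n => by positivity
    have hr1 : ∀ n : ℕ, ((1 : ℝ) / 2) ^ n ≤ 1 := fun n => pow_le_one₀ (by norm_num) (by norm_num)
    refine main_div hD G hsym hedge hnonedge hab (q := q) he hlam (T := T)
      (Finset.card_pos.1 (by omega)) L (r := fun n => ((1 : ℝ) / 2) ^ n)
      hr0 (Or.inl (tendsto_pow_atTop_nhds_zero_of_lt_one (by norm_num) (by norm_num)))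
      (fun ed => ∀ x ∈ ed, x ∈ S) ?_ ?_
    · intro n z hz u w hu hw
      obtain ⟨h1, h2, h3⟩ := hL _ (hr0 n) z hz
      have hr0 := hr0 n
      have hr1 := hr1 n
      have hin : ∀ u ∈ S, ‖pos v a b e (L z) u - pos v a b e (L z) k‖ ≤ 3 * (1 / 2) ^ n := by
        intro u huS
        by_cases huk : u = k
        · rw [huk, sub_self, norm_zero]; positivity
        have h : u ≠ v ∧ u ≠ a ∧ u ≠ b := ⟨fun h => hvS (h ▸ huS), hk u huS huk⟩
        have huT : (⟨u, h⟩ : {u : V // u ≠ v ∧ u ≠ a ∧ u ≠ b}) ∈ T := (hTm _).2 ⟨huk, huS⟩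
        rw [hposf _ u h, h2 _ huT]
        exact (boxSet_mem_T he hr0 hz huT).2.le
      have hall : ∀ u, u ≠ v → ‖pos v a b e (L z) u‖ ≤ 4 := by
        intro u huv
        by_cases huS : u ∈ S
        · have := hin u huS
          have := norm_sub_norm_le (pos v a b e (L z) u) (pos v a b e (L z) k)
          linarith
        by_cases hua : u = a
        · rw [hua, hposa]; simp
        by_cases hub : u = b
        · rw [hub, hposb, he]; norm_num
        have h : u ≠ v ∧ u ≠ a ∧ u ≠ b := ⟨huv, hua, hub⟩
        have huT : (⟨u, h⟩ : {u : V // u ≠ v ∧ u ≠ a ∧ u ≠ b}) ∉ T := fun h' => huS ((hTm _).1 h').2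
        rw [hposf _ u h, h3 _ huT]
        have := boxSet_mem_nT hz huT
        linarith
      split_ifs with hP
      · have i1 := hin u (hP u (by simp))
        have i2 := hin w (hP w (by simp))
        have i3 := norm_sub_le (pos v a b e (L z) u - pos v a b e (L z) k)
          (pos v a b e (L z) w - pos v a b e (L z) k)
        rw [sub_sub_sub_cancel_right] at i3
        linarith
      · have := hall u hu
        have := hall w hw
        have := norm_sub_le (pos v a b e (L z) u) (pos v a b e (L z) w)
        linarith
    · intro n
      have hr0 := hr0 n
      have hr1 := hr1 n
      rw [← Real.rpow_natCast, ← Real.rpow_neg hr0.le]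
      refine Real.rpow_le_rpow_of_exponent_ge hr0 hr1 ?_
      rw [neg_le_neg_iff]
      have hE : (∑ u, ∑ w, if u ≠ v ∧ w ≠ v ∧ (∀ x ∈ s(u, w), x ∈ S) then ν u w else 0) =
          ∑ u ∈ S, ∑ w ∈ S, ν u w := by
        have : ∀ u w, (u ≠ v ∧ w ≠ v ∧ (∀ x ∈ s(u, w), x ∈ S)) ↔ (u ∈ S ∧ w ∈ S) := by
          intro u w
          simp only [Sym2.mem_iff, forall_eq_or_imp, forall_eq]
          constructor
          · exact fun h => h.2.2
          · exact fun h => ⟨fun h' => hvS (h' ▸ h.1), fun h' => hvS (h' ▸ h.2), h⟩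
        simp_rw [this, ite_and]
        simp [Finset.sum_ite_mem, ← Finset.sum_filter]
      rw [hE]
      have hd : ∑ u ∈ S, ∑ w ∈ S, ν u w + ∑ u ∈ S, ∑ w ∈ Sᶜ, ν u w = S.card * ((D : ℝ) / lam) := by
        rw [← Finset.sum_add_distrib, ← nsmul_eq_mul, ← Finset.sum_const]
        refine Finset.sum_congr rfl fun u _ => ?_
        rw [Finset.sum_add_sum_compl, hdeg]
      rw [← hcard] at hd
      push_cast at hd
      have : T.card * ((D : ℝ) / lam) ≤ ∑ u ∈ S, ∑ w ∈ S, ν u w := by linarith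
      have := mul_le_mul_of_nonneg_left this hlam.le
      refine le_trans (le_of_eq ?_) this
      push_cast
      field_simp

end Helpers

/-- Every decompletion of a completed graph that is not primitive is
divergent: the position-space integrand is not Lebesgue integrable. -/
theorem decompletions_of_non_primitive_divergent
    (D : ℕ) (hD : 3 ≤ D) (V : Type) [Fintype V] [DecidableEq V]
    (hV : 4 ≤ Fintype.card V)
    (G : SimpleGraph V) [DecidableRel G.Adj]
    (ν : V → V → ℝ) (hsym : ∀ u w, ν u w = ν w u)
    (hedge : ∀ u w, G.Adj u w → 0 < ν u w)
    (hnonedge : ∀ u w, ¬G.Adj u w → ν u w = 0)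
    (hdeg : ∀ u : V, ∑ w : V, ν u w = (D : ℝ) / (((D : ℝ) - 2) / 2))
    (hnonprim : ∃ S : Finset V, 2 ≤ S.card ∧ 2 ≤ Sᶜ.card ∧
      ∑ u ∈ S, ∑ w ∈ Sᶜ, ν u w ≤ (D : ℝ) / (((D : ℝ) - 2) / 2)) :
    let lam : ℝ := ((D : ℝ) - 2) / 2
    let F : ∀ (v a b : V), EuclideanSpace ℝ (Fin D) →
        ({u : V // u ≠ v ∧ u ≠ a ∧ u ≠ b} → EuclideanSpace ℝ (Fin D)) → ℝ :=
      fun v a b e y =>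
        ∏ ed ∈ G.edgeFinset.filter (fun ed => v ∉ ed),
          Sym2.lift ⟨fun u w =>
            ‖(if u = a then 0 else if u = b then e
                else if h : u ≠ v ∧ u ≠ a ∧ u ≠ b then y ⟨u, h⟩ else 0) -
              (if w = a then 0 else if w = b then e
                else if h : w ≠ v ∧ w ≠ a ∧ w ≠ b then y ⟨w, h⟩ else 0)‖
              ^ (-(lam * (ν u w + ν w u))),
            fun u w => by dsimp only; rw [norm_sub_rev, add_comm (ν u w)]⟩ ed
    ∀ (v a b : V), v ≠ a → v ≠ b → a ≠ b →
      ∀ e : EuclideanSpace ℝ (Fin D), ‖e‖ = 1 → ¬ Integrable (F v a b e) := by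
  intro lam F v a b hva hvb hab e he
  have hD' : (3 : ℝ) ≤ D := by exact_mod_cast hD
  have hlam : 0 < lam := by simp only [lam]; linarith
  obtain ⟨S, h1, h2, h3⟩ := hnonprim
  by_cases hv : v ∈ S
  · refine final hD G hsym hedge hnonedge hlam hdeg hva hvb hab he Sᶜ (by simpa using hv) h2
      (by simpa using h1) ?_
    rw [compl_compl, Finset.sum_comm]
    simp_rw [fun u w => hsym w u]
    exact h3
  · exact final hD G hsym hedge hnonedge hlam hdeg hva hvb hab he S hv h1 h2 h3
end
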